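/- arXiv:2506.17932 — 2 statements merged into one kernel-verified Lean document; each statement's English description precedes it below -/
import Mathlib

section
/- Let X be a compact metric space, T: X → X a continuous map, and A = (t_i)_{i≥1} a sequence of natural numbers. Define K(A) = lim_{m→∞} limsup_{n→∞} (1/n)|S_A(n,m)|, where S_A(n,m) = {t_i + j : 1 ≤ i ≤ n, 0 ≤ j ≤ m−1}. Unless (K(A) = ∞ and h_top(T) = 0), the topological sequence entropy satisfies: h^A_top(T) = K(A)·h_top(T) if K(A) < ∞ and h_top(T) < ∞; h^A_top(T) = ∞ if K(A) = ∞ and h_top(T) > 0; h^A_top(T) = ∞ if K(A) > 0 and h_top(T) = ∞; and h^A_top(T) = 0 if K(A) = 0 and h_top(T) = ∞. -/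
open Filter

variable {X : Type*} [MetricSpace X]

/-- `spaN T F ε` : the minimal cardinality of a set `E ⊆ X` such that every `x ∈ X`
satisfies `max_{i ∈ F} dist (T^[i] x) (T^[i] e) ≤ ε` for some `e ∈ E`. -/
noncomputable def spaN (T : X → X) (F : Finset ℕ) (ε : ℝ) : ℕ :=
  sInf {k : ℕ | ∃ E : Finset X, E.card = k ∧
    ∀ x : X, ∃ e ∈ E, ∀ i ∈ F, dist (T^[i] x) (T^[i] e) ≤ ε}

/-- Topological sequence entropy along the sequence `A = (t_i)_{i ≥ 1}`:
`h^A_top(T) = lim_{ε→0⁺} limsup_n (1/n) log spa(T,{t₁,…,t_n},ε)`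
(the limit as `ε → 0⁺` of the antitone-in-`ε` quantity is its supremum over `ε > 0`). -/
noncomputable def seqEntTop (T : X → X) (A : ℕ → ℕ) : EReal :=
  ⨆ (ε : ℝ) (_ : 0 < ε),
    Filter.limsup
      (fun n : ℕ =>
        ((Real.log (spaN T ((Finset.Icc 1 n).image A) ε) / n : ℝ) : EReal))
      Filter.atTop

/-- Topological entropy: topological sequence entropy along `t_i = i − 1`,
i.e. with index sets `{0,…,n−1}`. -/
noncomputable def htopN (T : X → X) : EReal := seqEntTop T (fun i => i - 1)

open Pointwise in
/-- `K(A) = lim_{m→∞} limsup_{n→∞} (1/n)|S_A(n,m)|` where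
`S_A(n,m) = {t_i + j : 1 ≤ i ≤ n, 0 ≤ j ≤ m−1}` (the limit in `m` of the monotone-in-`m`
quantity is its supremum over `m`). -/
noncomputable def KA (A : ℕ → ℕ) : EReal :=
  ⨆ m : ℕ, Filter.limsup
    (fun n : ℕ =>
      (((((Finset.Icc 1 n).image A + Finset.range m).card : ℝ) / n : ℝ) : EReal))
    Filter.atTop


section Core

open Classical in
/-- size of the set of points with the same names as `x` at times `< j` -/
noncomputable def fibC {Ω κ : Type*} [Fintype Ω] (Z : ℕ → Ω → κ) (j : ℕ) (x : Ω) : ℕ :=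
  (Finset.univ.filter (fun y => ∀ i < j, Z i y = Z i x)).card

lemma fibC_pos {Ω κ : Type*} [Fintype Ω] (Z : ℕ → Ω → κ) (j : ℕ) (x : Ω) : 0 < fibC Z j x := by
  classical
  unfold fibC
  apply Finset.card_pos.2
  exact ⟨x, by simp⟩

lemma fibC_congr {Ω κ : Type*} [Fintype Ω] (Z : ℕ → Ω → κ) (j : ℕ) (x y : Ω)
    (h : ∀ i < j, Z i y = Z i x) : fibC Z j x = fibC Z j y := by
  classical
  unfold fibC
  congr 1
  ext z
  simp only [Finset.mem_filter, Finset.mem_univ, true_and]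
  constructor
  · intro h1 i hi
    rw [h1 i hi, h i hi]
  · intro h1 i hi
    rw [h1 i hi, h i hi]

lemma fibC_anti {Ω κ : Type*} [Fintype Ω] (Z : ℕ → Ω → κ) (j : ℕ) (x : Ω) :
    fibC Z (j+1) x ≤ fibC Z j x := by
  classical
  unfold fibC
  apply Finset.card_le_card
  intro z
  simp only [Finset.mem_filter, Finset.mem_univ, true_and]
  intro h i hi
  exact h i (by omega)

lemma fibC_zero {Ω κ : Type*} [Fintype Ω] (Z : ℕ → Ω → κ) (x : Ω) :
    fibC Z 0 x = Fintype.card Ω := by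
  classical
  unfold fibC
  simp

lemma core_prod {Ω κ : Type*} [Fintype Ω] [Fintype κ] (Z : ℕ → Ω → κ)
    (w : ℕ → κ → ℝ) (hw : ∀ j z, 0 ≤ w j z) (W : ℝ) (hW : ∀ j, ∑ z, w j z ≤ W)
    (hW0 : 0 ≤ W) (Q : Finset ℕ) :
    ∑ x, ∏ j ∈ Q, (w j (Z j x) * ((fibC Z j x : ℝ) / fibC Z (j+1) x))
      ≤ Fintype.card Ω * W ^ Q.card := by
  classical
  induction Q using Finset.induction_on_max with
  | empty => simp
  | insert N Q hQ ih =>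
    have hN : N ∉ Q := fun h => lt_irrefl _ (hQ N h)
    set P : Ω → ℝ := fun x => ∏ j ∈ Q, (w j (Z j x) * ((fibC Z j x : ℝ) / fibC Z (j+1) x)) with hP
    have hP0 : ∀ x, 0 ≤ P x := fun x => Finset.prod_nonneg fun j _ =>
      mul_nonneg (hw _ _) (by positivity)
    have hPc : ∀ x y, (∀ i < N, Z i y = Z i x) → P x = P y := by
      intro x y h
      apply Finset.prod_congr rfl
      intro j hj
      have hjN := hQ j hj
      rw [fibC_congr Z j x y (fun i hi => h i (by omega)),
        fibC_congr Z (j+1) x y (fun i hi => h i (by omega)), h j hjN]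
    have h1 : ∀ x, ∏ j ∈ insert N Q, (w j (Z j x) * ((fibC Z j x : ℝ) / fibC Z (j+1) x))
        = ∑ y, if (∀ i < N, Z i y = Z i x) then P y * (w N (Z N x) / fibC Z (N+1) x) else 0 := by
      intro x
      rw [Finset.prod_insert hN, ← Finset.sum_filter]
      rw [Finset.sum_congr rfl (g := fun _ => P x * (w N (Z N x) / fibC Z (N+1) x))]
      · rw [Finset.sum_const, nsmul_eq_mul]
        change _ * P x = (fibC Z N x : ℝ) * _
        ring
      · intro y hy
        rw [hPc x y (by simpa using hy)]
    rw [Finset.sum_congr rfl (fun x _ => h1 x), Finset.sum_comm, Finset.card_insert_of_notMem hN,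
      pow_succ]
    have h2 : ∀ y, (∑ x, if (∀ i < N, Z i y = Z i x) then
        P y * (w N (Z N x) / fibC Z (N+1) x) else 0) ≤ P y * W := by
      intro y
      have : (∑ x, if (∀ i < N, Z i y = Z i x) then
        P y * (w N (Z N x) / fibC Z (N+1) x) else 0) = P y * ∑ z, w N z *
          ∑ x, if (∀ i < N, Z i y = Z i x) ∧ Z N x = z then (1 / fibC Z (N+1) x : ℝ) else 0 := by
        simp_rw [Finset.mul_sum]
        rw [Finset.sum_comm]
        apply Finset.sum_congr rfl
        intro x _
        rw [Finset.sum_eq_single (Z N x)]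
        · split_ifs with h3 h4 h4
          · ring
          · exact absurd ⟨h3, rfl⟩ h4
          · exact absurd h4.1 h3
          · simp
        · intro z _ hz
          rw [if_neg (fun h => hz h.2.symm)]
          simp
        · simp
      rw [this]
      apply mul_le_mul_of_nonneg_left _ (hP0 y)
      refine le_trans (Finset.sum_le_sum (g := fun z => w N z * 1) ?_) (by simpa using hW N)
      intro z _
      apply mul_le_mul_of_nonneg_left _ (hw _ _)
      rw [← Finset.sum_filter]
      set C := Finset.univ.filter (fun x => (∀ i < N, Z i y = Z i x) ∧ Z N x = z) with hC
      have h5 : ∀ x ∈ C, fibC Z (N+1) x = C.card := by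
        intro x hx
        unfold fibC
        congr 1
        ext u
        simp only [hC, Finset.mem_filter, Finset.mem_univ, true_and] at hx ⊢
        constructor
        · intro h
          exact ⟨fun i hi => by rw [hx.1 i hi, h i (by omega)], by rw [h N (by omega), hx.2]⟩
        · intro h i hi
          rcases Nat.lt_succ_iff_lt_or_eq.1 hi with h6 | h6
          · rw [← hx.1 i h6, h.1 i h6]
          · rw [h6, h.2, hx.2]
      rw [Finset.sum_congr rfl (g := fun _ => (1 / C.card : ℝ)) (fun x hx => by rw [h5 x hx])]
      rw [Finset.sum_const, nsmul_eq_mul, mul_one_div]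
      exact div_self_le_one _
    calc _ ≤ ∑ y, P y * W := Finset.sum_le_sum fun y _ => h2 y
      _ = (∑ y, P y) * W := by rw [Finset.sum_mul]
      _ ≤ (Fintype.card Ω * W ^ Q.card) * W := mul_le_mul_of_nonneg_right ih hW0
      _ = _ := by ring

lemma core_jensen {Ω : Type*} [Fintype Ω] (f : Ω → ℝ) (hf : ∀ x, 0 < f x) (M : ℝ) (hM : 0 < M)
    (h : ∑ x, f x ≤ Fintype.card Ω * M) : ∑ x, Real.log (f x) ≤ Fintype.card Ω * Real.log M := by
  have h1 : ∀ x, Real.log (f x) ≤ f x / M - 1 + Real.log M := by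
    intro x
    have := Real.log_le_sub_one_of_pos (div_pos (hf x) hM)
    rw [Real.log_div (hf x).ne' hM.ne'] at this
    linarith
  refine (Finset.sum_le_sum fun x _ => h1 x).trans ?_
  rw [Finset.sum_add_distrib, Finset.sum_sub_distrib, ← Finset.sum_div]
  simp only [Finset.sum_const, Finset.card_univ, nsmul_eq_mul, mul_one]
  have : (∑ x, f x) / M ≤ Fintype.card Ω := by
    rw [div_le_iff₀ hM]; exact h
  linarith

/-- information at time `j` -/
noncomputable def infB {Ω κ : Type*} [Fintype Ω] (Z : ℕ → Ω → κ) (j : ℕ) (x : Ω) : ℝ :=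
  Real.log ((fibC Z j x : ℝ) / fibC Z (j+1) x)

lemma infB_nonneg {Ω κ : Type*} [Fintype Ω] (Z : ℕ → Ω → κ) (j : ℕ) (x : Ω) :
    0 ≤ infB Z j x := by
  apply Real.log_nonneg
  rw [one_le_div (by exact_mod_cast fibC_pos Z _ x)]
  exact_mod_cast fibC_anti Z j x

lemma infB_sum {Ω κ : Type*} [Fintype Ω] (Z : ℕ → Ω → κ) (L : ℕ) (x : Ω) :
    ∑ j ∈ Finset.range L, infB Z j x
      = Real.log (Fintype.card Ω) - Real.log (fibC Z L x) := by
  rw [← fibC_zero Z x]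
  have : ∀ j, infB Z j x = Real.log (fibC Z j x) - Real.log (fibC Z (j+1) x) := by
    intro j
    unfold infB
    have h1 := fibC_pos Z j x
    have h2 := fibC_pos Z (j+1) x
    rw [Real.log_div (by positivity) (by positivity)]
  simp_rw [this]
  rw [Finset.sum_range_sub']

lemma core_trivial {Ω κ : Type*} [Fintype Ω] [Fintype κ] [Nonempty κ] (Z : ℕ → Ω → κ) (D : ℕ) :
    ∑ x, ∑ j ∈ Finset.range D, infB Z j x
      ≤ Fintype.card Ω * (D * Real.log (Fintype.card κ)) := by
  have h := core_prod Z (fun _ _ => 1) (fun _ _ => zero_le_one) (Fintype.card κ : ℝ) (by simp)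
    (by positivity) (Finset.range D)
  have hpos : ∀ j x, (0:ℝ) < (fibC Z j x : ℝ) / fibC Z (j+1) x := by
    intro j x
    have h1 := fibC_pos Z j x
    have h2 := fibC_pos Z (j+1) x
    positivity
  have hK : 0 < Fintype.card κ := Fintype.card_pos
  have h3 := core_jensen _ (fun x => Finset.prod_pos fun j _ => by
    simpa using hpos j x) _ (by positivity) h
  rw [Real.log_pow, Finset.card_range] at h3
  refine le_trans (le_of_eq ?_) h3
  apply Finset.sum_congr rfl
  intro x _
  rw [Real.log_prod (fun j _ => by simpa using (hpos j x).ne')]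
  simp [infB]

open Classical in
lemma core_one {Ω κ Γ : Type*} [Fintype Ω] [Fintype κ] [Nonempty κ] [Fintype Γ] [Nonempty Γ]
    (Z : ℕ → Ω → κ) (Q : Finset ℕ) (ζ : Γ → ℕ → κ) (γ : Ω → Γ) (bad : ℕ → Ω → Prop)
    (hbad : ∀ j ∈ Q, ∀ x, ¬ bad j x → Z j x = ζ (γ x) j) (η : ℝ) (hη : 0 < η) (hη1 : η ≤ 1) :
    ∑ x, ∑ j ∈ Q, infB Z j x
      ≤ Fintype.card Ω * (Real.log (Fintype.card Γ) + Q.card * Real.log (1 + η))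
        + Real.log (Fintype.card κ / η) * ∑ x, ∑ j ∈ Q, if bad j x then (1:ℝ) else 0 := by
  have hK : 0 < Fintype.card κ := Fintype.card_pos
  have hK1 : (1:ℝ) ≤ Fintype.card κ := by exact_mod_cast hK
  have hG : 0 < Fintype.card Γ := Fintype.card_pos
  obtain ⟨K, hKdef⟩ : ∃ K : ℝ, K = (Fintype.card κ : ℝ) := ⟨_, rfl⟩
  rw [← hKdef] at hK1 ⊢
  have hK0 : 0 < K := by linarith
  have hηK : 0 < η / K := by positivity
  have hηK1 : η / K ≤ 1 := by
    rw [div_le_one (by positivity)]; linarith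
  set w : Γ → ℕ → κ → ℝ := fun g j z => if z = ζ g j then 1 else η / K with hwdef
  have hw0 : ∀ g j z, 0 < w g j z := by
    intro g j z
    simp only [hwdef]
    split_ifs <;> first | exact one_pos | exact hηK
  have hwW : ∀ g j, ∑ z, w g j z ≤ 1 + η := by
    intro g j
    calc ∑ z, w g j z ≤ ∑ z, ((if z = ζ g j then 1 else 0) + η / K) := by
          apply Finset.sum_le_sum
          intro z _
          simp only [hwdef]
          split_ifs <;> linarith
      _ = 1 + η := by
          rw [Finset.sum_add_distrib]
          simp only [Finset.sum_ite_eq', Finset.mem_univ, if_true, Finset.sum_const,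
            Finset.card_univ, nsmul_eq_mul]
          rw [← hKdef, mul_div_cancel₀ _ (by positivity)]
  have hpos : ∀ j x, (0:ℝ) < (fibC Z j x : ℝ) / fibC Z (j+1) x := by
    intro j x
    have h1 := fibC_pos Z j x
    have h2 := fibC_pos Z (j+1) x
    positivity
  set f : Γ → Ω → ℝ := fun g x => ∏ j ∈ Q, (w g j (Z j x) * ((fibC Z j x : ℝ) / fibC Z (j+1) x))
    with hf
  have hf0 : ∀ g x, 0 < f g x := fun g x => Finset.prod_pos fun j _ => mul_pos (hw0 _ _ _) (hpos j x)
  have hsum : ∑ x, f (γ x) x ≤ Fintype.card Ω * (Fintype.card Γ * (1 + η) ^ Q.card) := by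
    calc ∑ x, f (γ x) x ≤ ∑ x, ∑ g, f g x := by
          apply Finset.sum_le_sum
          intro x _
          exact Finset.single_le_sum (f := fun g => f g x) (fun g _ => (hf0 g x).le)
            (Finset.mem_univ (γ x))
      _ = ∑ g, ∑ x, f g x := Finset.sum_comm
      _ ≤ ∑ g : Γ, Fintype.card Ω * (1 + η) ^ Q.card := by
          apply Finset.sum_le_sum
          intro g _
          exact core_prod Z (w g) (fun j z => (hw0 g j z).le) (1 + η) (hwW g) (by positivity) Q
      _ = _ := by
          simp only [Finset.sum_const, Finset.card_univ, nsmul_eq_mul]; ring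
  have h3 := core_jensen _ (fun x => hf0 (γ x) x) _ (by positivity) hsum
  rw [Real.log_mul (by positivity) (by positivity), Real.log_pow] at h3
  have h4 : ∀ x, ∑ j ∈ Q, infB Z j x - Real.log (K / η) * ∑ j ∈ Q, (if bad j x then (1:ℝ) else 0)
      ≤ Real.log (f (γ x) x) := by
    intro x
    simp only [hf]
    rw [Real.log_prod (fun j _ => (mul_pos (hw0 _ _ _) (hpos j x)).ne'), Finset.mul_sum,
      ← Finset.sum_sub_distrib]
    apply Finset.sum_le_sum
    intro j hj
    rw [Real.log_mul (hw0 _ _ _).ne' (hpos j x).ne']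
    have h5 : Real.log (η / K) = - Real.log (K / η) := by
      rw [← Real.log_inv, inv_div]
    have h6 : Real.log (η / K) ≤ 0 := Real.log_nonpos hηK.le hηK1
    change infB Z j x - _ ≤ _ + infB Z j x
    by_cases hb : bad j x
    · simp only [hb, if_true, mul_one, hwdef]
      split_ifs
      · simp; linarith
      · linarith
    · have := hbad j hj x hb
      simp only [hb, if_false, mul_zero, hwdef, this, if_true, Real.log_one]
      linarith
  have h7 := (Finset.sum_le_sum fun x (_ : x ∈ Finset.univ) => h4 x).trans h3
  rw [Finset.sum_sub_distrib, ← Finset.mul_sum] at h7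
  linarith

open Classical in
lemma core_main {Ω κ Γ : Type*} [Fintype Ω] [Fintype κ] [Nonempty κ] [Fintype Γ] [Nonempty Γ]
    (Z : ℕ → Ω → κ) (S : Finset ℕ) (D L : ℕ) (hD : ∀ s ∈ S, s ≤ D)
    (ζ : Γ → ℕ → κ) (γ : ℕ → Ω → Γ) (bad : ℕ → Ω → Prop)
    (hbad : ∀ a, ∀ s ∈ S, ∀ x, ¬ bad (a + s) x → Z (a + s) x = ζ (γ a x) s)
    (hinj : ∀ x y, (∀ j < L, Z j x = Z j y) → x = y)
    (η : ℝ) (hη : 0 < η) (hη1 : η ≤ 1) :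
    Fintype.card Ω * (S.card * (Real.log (Fintype.card Ω) - D * Real.log (Fintype.card κ)))
      ≤ Fintype.card Ω * (L * (Real.log (Fintype.card Γ) + S.card * Real.log (1 + η)))
        + Real.log (Fintype.card κ / η) * (S.card *
          ∑ x, ∑ j ∈ Finset.range (L + D), if bad j x then (1:ℝ) else 0) := by
  have hK : 0 < Fintype.card κ := Fintype.card_pos
  have hK1 : (1:ℝ) ≤ Fintype.card κ := by exact_mod_cast hK
  have hlog : 0 ≤ Real.log (Fintype.card κ / η) := by
    apply Real.log_nonneg
    rw [one_le_div hη]; linarith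
  have h1 : ∀ a, ∑ x, ∑ s ∈ S, infB Z (a + s) x
      ≤ Fintype.card Ω * (Real.log (Fintype.card Γ) + S.card * Real.log (1 + η))
        + Real.log (Fintype.card κ / η) * ∑ x, ∑ s ∈ S, if bad (a + s) x then (1:ℝ) else 0 := by
    intro a
    have := core_one Z (S.map (addLeftEmbedding a)) (fun g j => ζ g (j - a)) (γ a) bad (by
      intro j hj x hb
      obtain ⟨s, hs, rfl⟩ := Finset.mem_map.1 hj
      simp only [addLeftEmbedding_apply] at hb ⊢
      rw [hbad a s hs x hb]
      simp) η hη hη1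
    rw [Finset.card_map] at this
    simp only [Finset.sum_map, addLeftEmbedding_apply] at this
    exact this
  have h2 := Finset.sum_le_sum fun a (_ : a ∈ Finset.range L) => h1 a
  rw [Finset.sum_add_distrib, Finset.sum_const, Finset.card_range,
    nsmul_eq_mul, ← Finset.mul_sum] at h2
  -- lower bound of the left side
  have hlow : ∀ x, S.card * (∑ j ∈ Finset.range L, infB Z j x - ∑ j ∈ Finset.range D, infB Z j x)
      ≤ ∑ a ∈ Finset.range L, ∑ s ∈ S, infB Z (a + s) x := by
    intro x
    rw [Finset.sum_comm, ← nsmul_eq_mul, ← Finset.sum_const]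
    apply Finset.sum_le_sum
    intro s hs
    have hsD := hD s hs
    have : ∑ j ∈ Finset.range L, infB Z j x ≤
      ∑ j ∈ Finset.range D ∪ (Finset.range L).map (addRightEmbedding s), infB Z j x := by
      apply Finset.sum_le_sum_of_subset_of_nonneg
      · intro j hj
        simp only [Finset.mem_union, Finset.mem_range, Finset.mem_map, addRightEmbedding_apply] at *
        by_cases h : j < D
        · exact Or.inl h
        · exact Or.inr ⟨j - s, by omega, by omega⟩
      · intros; exact infB_nonneg _ _ _
    have h3 := Finset.sum_union_inter (s₁ := Finset.range D)
      (s₂ := (Finset.range L).map (addRightEmbedding s)) (f := fun j => infB Z j x)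
    have h4 : 0 ≤ ∑ j ∈ Finset.range D ∩ (Finset.range L).map (addRightEmbedding s), infB Z j x :=
      Finset.sum_nonneg fun j _ => infB_nonneg _ _ _
    rw [Finset.sum_map] at h3
    simp only [addRightEmbedding_apply] at h3
    linarith
  have hup : ∀ x, ∑ a ∈ Finset.range L, ∑ s ∈ S, (if bad (a + s) x then (1:ℝ) else 0)
      ≤ S.card * ∑ j ∈ Finset.range (L + D), if bad j x then (1:ℝ) else 0 := by
    intro x
    rw [Finset.sum_comm, ← nsmul_eq_mul, ← Finset.sum_const]
    apply Finset.sum_le_sum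
    intro s hs
    have hsD := hD s hs
    have h5 : ∑ a ∈ Finset.range L, (if bad (a + s) x then (1:ℝ) else 0) =
      ∑ j ∈ (Finset.range L).map (addRightEmbedding s), if bad j x then (1:ℝ) else 0 := by
      rw [Finset.sum_map]; rfl
    rw [h5]
    apply Finset.sum_le_sum_of_subset_of_nonneg
    · intro j hj
      simp only [Finset.mem_range, Finset.mem_map, addRightEmbedding_apply] at *
      omega
    · intros; split_ifs <;> norm_num
  have hLx : ∀ x, ∑ j ∈ Finset.range L, infB Z j x = Real.log (Fintype.card Ω) := by
    intro x
    rw [infB_sum]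
    have : fibC Z L x = 1 := by
      unfold fibC
      rw [Finset.card_eq_one]
      refine ⟨x, ?_⟩
      ext y
      simp only [Finset.mem_filter, Finset.mem_univ, true_and, Finset.mem_singleton]
      exact ⟨fun h => hinj y x h, fun h => by simp [h]⟩
    simp [this]
  have hD' := core_trivial Z D
  have e1 := Finset.sum_le_sum fun x (_ : x ∈ (Finset.univ : Finset Ω)) => hlow x
  have e2 := Finset.sum_le_sum fun x (_ : x ∈ (Finset.univ : Finset Ω)) => hup x
  rw [← Finset.mul_sum] at e1 e2
  rw [Finset.sum_sub_distrib, Finset.sum_congr rfl (fun x _ => hLx x), Finset.sum_const,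
    Finset.card_univ, nsmul_eq_mul] at e1
  rw [Finset.sum_comm (s := Finset.range L)] at h2
  rw [Finset.sum_comm] at e2
  have e3 := mul_le_mul_of_nonneg_left e2 hlog
  have e4 := mul_le_mul_of_nonneg_left hD' (Nat.cast_nonneg (α := ℝ) S.card)
  linarith

end Core

section Span

def SpansE (T : X → X) (F : Finset ℕ) (ε : ℝ) (E : Finset X) : Prop :=
  ∀ x : X, ∃ e ∈ E, ∀ i ∈ F, dist (T^[i] x) (T^[i] e) ≤ ε

lemma spaN_le {T : X → X} {F : Finset ℕ} {ε : ℝ} {E : Finset X} (h : SpansE T F ε E) :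
    spaN T F ε ≤ E.card := Nat.sInf_le ⟨E, rfl, h⟩

lemma exists_spans [CompactSpace X] (T : X → X) (hT : Continuous T) (F : Finset ℕ) {ε : ℝ}
    (hε : 0 < ε) : ∃ E : Finset X, SpansE T F ε E := by
  have hopen : ∀ x : X, IsOpen {y | ∀ i ∈ F, dist (T^[i] y) (T^[i] x) < ε} := by
    intro x
    have : {y | ∀ i ∈ F, dist (T^[i] y) (T^[i] x) < ε}
      = ⋂ i ∈ F, {y | dist (T^[i] y) (T^[i] x) < ε} := by
      ext y; simp
    rw [this]
    apply isOpen_biInter_finset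
    intro i _
    exact isOpen_lt ((hT.iterate i).dist continuous_const) continuous_const
  obtain ⟨E, hE⟩ := isCompact_univ.elim_finite_subcover
    (fun x => {y | ∀ i ∈ F, dist (T^[i] y) (T^[i] x) < ε}) hopen (by
      intro x _
      simp only [Set.mem_iUnion, Set.mem_ofPred_eq]
      exact ⟨x, fun i _ => by simpa using hε⟩)
  refine ⟨E, fun x => ?_⟩
  have := hE (Set.mem_univ x)
  simp only [Set.mem_iUnion, Set.mem_ofPred_eq] at this
  obtain ⟨e, he, h⟩ := this
  exact ⟨e, he, fun i hi => (h i hi).le⟩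

lemma spaN_spec [CompactSpace X] (T : X → X) (hT : Continuous T) (F : Finset ℕ) {ε : ℝ}
    (hε : 0 < ε) : ∃ E : Finset X, E.card = spaN T F ε ∧ SpansE T F ε E := by
  have : spaN T F ε ∈ {k : ℕ | ∃ E : Finset X, E.card = k ∧
    ∀ x : X, ∃ e ∈ E, ∀ i ∈ F, dist (T^[i] x) (T^[i] e) ≤ ε} := by
    apply Nat.sInf_mem
    obtain ⟨E, hE⟩ := exists_spans T hT F hε
    exact ⟨E.card, E, rfl, hE⟩
  exact this

lemma SpansE.nonempty [Nonempty X] {T : X → X} {F : Finset ℕ} {ε : ℝ} {E : Finset X}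
    (h : SpansE T F ε E) : E.Nonempty := by
  obtain ⟨e, he, _⟩ := h (Classical.arbitrary X)
  exact ⟨e, he⟩

lemma spaN_pos [CompactSpace X] [Nonempty X] (T : X → X) (hT : Continuous T) (F : Finset ℕ) {ε : ℝ}
    (hε : 0 < ε) : 0 < spaN T F ε := by
  obtain ⟨E, h1, h2⟩ := spaN_spec T hT F hε
  rw [← h1]
  exact h2.nonempty.card_pos

lemma log_spaN_nonneg (T : X → X) (F : Finset ℕ) (ε : ℝ) : 0 ≤ Real.log (spaN T F ε) :=
  Real.log_natCast_nonneg _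

lemma spaN_mono [CompactSpace X] (T : X → X) (hT : Continuous T) {F F' : Finset ℕ} (h : F ⊆ F')
    {ε : ℝ} (hε : 0 < ε) : spaN T F ε ≤ spaN T F' ε := by
  obtain ⟨E, h1, h2⟩ := spaN_spec T hT F' hε
  rw [← h1]
  apply spaN_le
  intro x
  obtain ⟨e, he, h3⟩ := h2 x
  exact ⟨e, he, fun i hi => h3 i (h hi)⟩

open Pointwise in
lemma spaN_blocks [CompactSpace X] [Nonempty X] (T : X → X) (hT : Continuous T) (B F : Finset ℕ)
    {ε : ℝ} (hε : 0 < ε) : spaN T (B + F) (2 * ε) ≤ spaN T F ε ^ B.card := by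
  classical
  obtain ⟨P, h1, h2⟩ := spaN_spec T hT F hε
  have h3 : ∀ x : X, ∃ e : P, ∀ i ∈ F, dist (T^[i] x) (T^[i] e) ≤ ε := by
    intro x
    obtain ⟨e, he, h⟩ := h2 x
    exact ⟨⟨e, he⟩, h⟩
  choose ψ hψ using h3
  let φ : X → (B → P) := fun x b => ψ (T^[b] x)
  have h4 : SpansE T (B + F) (2 * ε) (Finset.univ.image (Function.invFun φ)) := by
    intro x
    refine ⟨Function.invFun φ (φ x), Finset.mem_image_of_mem _ (Finset.mem_univ _), ?_⟩
    have h5 : φ (Function.invFun φ (φ x)) = φ x := Function.invFun_eq ⟨x, rfl⟩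
    intro i hi
    obtain ⟨b, hb, j, hj, rfl⟩ := Finset.mem_add.1 hi
    rw [add_comm b j, Function.iterate_add_apply, Function.iterate_add_apply]
    have h6 := hψ (T^[b] x) j hj
    have h7 := hψ (T^[b] (Function.invFun φ (φ x))) j hj
    have h8 := congrFun h5 ⟨b, hb⟩
    simp only [φ] at h8 h7 ⊢
    rw [h8, dist_comm] at h7
    calc _ ≤ _ := dist_triangle _ _ _
      _ ≤ ε + ε := add_le_add h6 h7
      _ = 2 * ε := by ring
  refine (spaN_le h4).trans (Finset.card_image_le.trans ?_)
  simp [h1]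

open Pointwise in
lemma greedy (m : ℕ) : ∀ (N : ℕ) (F : Finset ℕ), F.card ≤ N → 1 ≤ m →
    ∃ B : Finset ℕ, B ⊆ F ∧ F ⊆ B + Finset.range m ∧ B.card * m ≤ (F + Finset.range m).card := by
  classical
  intro N
  induction N with
  | zero =>
    intro F hF _
    have : F = ∅ := by simpa using hF
    exact ⟨∅, by simp [this]⟩
  | succ N ih =>
    intro F hF hm
    rcases F.eq_empty_or_nonempty with h0 | h0
    · exact ⟨∅, by simp [h0]⟩
    set a := F.min' h0 with ha
    have haF : a ∈ F := F.min'_mem h0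
    have hmin : ∀ x ∈ F, a ≤ x := fun x hx => F.min'_le x hx
    set F' := F.filter (fun x => a + m ≤ x) with hF'
    have hc : F'.card < F.card := by
      apply Finset.card_lt_card
      refine Finset.filter_ssubset.2 ⟨a, haF, by omega⟩
    obtain ⟨B, hB1, hB2, hB3⟩ := ih F' (by omega) hm
    have haB : a ∉ B := by
      intro h
      have := hB1 h
      rw [hF', Finset.mem_filter] at this
      omega
    refine ⟨insert a B, ?_, ?_, ?_⟩
    · intro x hx
      rcases Finset.mem_insert.1 hx with rfl | h
      · exact haF
      · exact (Finset.mem_filter.1 (hB1 h)).1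
    · intro x hx
      by_cases h : a + m ≤ x
      · have := hB2 (Finset.mem_filter.2 ⟨hx, h⟩)
        exact Finset.add_subset_add_right (Finset.subset_insert a B) this
      · have := hmin x hx
        exact Finset.mem_add.2 ⟨a, Finset.mem_insert_self _ _, x - a,
          Finset.mem_range.2 (by omega), by omega⟩
    · rw [Finset.card_insert_of_notMem haB]
      have hdisj : Disjoint (F' + Finset.range m) (Finset.Ico a (a + m)) := by
        rw [Finset.disjoint_left]
        intro x hx hx2
        obtain ⟨b, hb, j, hj, rfl⟩ := Finset.mem_add.1 hx
        rw [hF', Finset.mem_filter] at hb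
        rw [Finset.mem_Ico] at hx2
        omega
      have hsub : (F' + Finset.range m) ∪ (Finset.Ico a (a + m)) ⊆ F + Finset.range m := by
        apply Finset.union_subset
        · exact Finset.add_subset_add_right (Finset.filter_subset _ _)
        · intro x hx
          rw [Finset.mem_Ico] at hx
          exact Finset.mem_add.2 ⟨a, haF, x - a, Finset.mem_range.2 (by omega), by omega⟩
      have := Finset.card_le_card hsub
      rw [Finset.card_union_of_disjoint hdisj, Nat.card_Ico] at this
      have e : a + m - a = m := by omega
      rw [e] at this
      nlinarith

open Pointwise in
lemma upper_fin [CompactSpace X] [Nonempty X] (T : X → X) (hT : Continuous T) (F : Finset ℕ)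
    (m : ℕ) (hm : 1 ≤ m) {ε : ℝ} (hε : 0 < ε) :
    Real.log (spaN T F (2 * ε)) ≤
      (F + Finset.range m).card * (Real.log (spaN T (Finset.range m) ε) / m) := by
  obtain ⟨B, -, h2, h3⟩ := greedy m F.card F le_rfl hm
  have h4 := (spaN_mono T hT h2 (by positivity : 0 < 2 * ε)).trans
    (spaN_blocks T hT B (Finset.range m) hε)
  have h5 : Real.log (spaN T F (2 * ε)) ≤ B.card * Real.log (spaN T (Finset.range m) ε) := by
    rw [← Real.log_pow]
    apply Real.log_le_log
    · exact_mod_cast spaN_pos T hT F (by positivity)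
    · exact_mod_cast h4
  refine h5.trans ?_
  have hm' : (0:ℝ) < m := by exact_mod_cast hm
  have h6 : (B.card : ℝ) * m ≤ (F + Finset.range m).card := by exact_mod_cast h3
  rw [mul_div_assoc', le_div_iff₀ hm']
  nlinarith [log_spaN_nonneg T (Finset.range m) ε]

open Pointwise in
lemma thicken [CompactSpace X] (T : X → X) (hT : Continuous T) (m : ℕ) {δ : ℝ} (hδ : 0 < δ) :
    ∃ δ' > 0, ∀ F : Finset ℕ, spaN T (F + Finset.range m) δ ≤ spaN T F δ' := by
  have h : ∀ j : ℕ, ∃ d > 0, ∀ x y : X, dist x y < d → dist (T^[j] x) (T^[j] y) < δ := by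
    intro j
    have := CompactSpace.uniformContinuous_of_continuous (hT.iterate j)
    rw [Metric.uniformContinuous_iff] at this
    obtain ⟨d, h1, h2⟩ := this δ hδ
    exact ⟨d, h1, fun x y h => h2 h⟩
  have h' : ∃ d > 0, ∀ j < m, ∀ x y : X, dist x y < d → dist (T^[j] x) (T^[j] y) < δ := by
    clear * - h
    induction m with
    | zero => exact ⟨1, one_pos, by simp⟩
    | succ m ih =>
      obtain ⟨d, h1, h2⟩ := ih
      obtain ⟨d', h3, h4⟩ := h m
      refine ⟨min d d', lt_min h1 h3, fun j hj x y hxy => ?_⟩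
      rcases Nat.lt_succ_iff_lt_or_eq.1 hj with h5 | rfl
      · exact h2 j h5 x y (hxy.trans_le (min_le_left _ _))
      · exact h4 x y (hxy.trans_le (min_le_right _ _))
  obtain ⟨d, hd, h2⟩ := h'
  refine ⟨d / 2, by positivity, fun F => ?_⟩
  obtain ⟨E, h3, h4⟩ := spaN_spec T hT F (by positivity : 0 < d / 2)
  rw [← h3]
  apply spaN_le
  intro x
  obtain ⟨e, he, h5⟩ := h4 x
  refine ⟨e, he, fun i hi => ?_⟩
  obtain ⟨b, hb, j, hj, rfl⟩ := Finset.mem_add.1 hi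
  rw [add_comm b j, Function.iterate_add_apply, Function.iterate_add_apply]
  exact (h2 j (Finset.mem_range.1 hj) _ _ (by linarith [h5 b hb])).le

lemma exists_sep [CompactSpace X] (T : X → X) (hT : Continuous T) (F : Finset ℕ) {ε : ℝ}
    (hε : 0 < ε) : ∃ E : Finset X, SpansE T F ε E ∧
      ∀ x ∈ E, ∀ y ∈ E, (∀ i ∈ F, dist (T^[i] x) (T^[i] y) ≤ ε / 2) → x = y := by
  classical
  obtain ⟨P, hP⟩ := exists_spans T hT F (by positivity : 0 < ε / 2)
  let 𝒮 := P.powerset.filter (fun E => ∀ x ∈ E, ∀ y ∈ E,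
    (∀ i ∈ F, dist (T^[i] x) (T^[i] y) ≤ ε / 2) → x = y)
  have hne : 𝒮.Nonempty := ⟨∅, by simp [𝒮]⟩
  obtain ⟨E, hE, hmax⟩ := Finset.exists_max_image 𝒮 Finset.card hne
  simp only [𝒮, Finset.mem_filter, Finset.mem_powerset] at hE hmax
  refine ⟨E, ?_, hE.2⟩
  have key : ∀ p ∈ P, ∃ e ∈ E, ∀ i ∈ F, dist (T^[i] p) (T^[i] e) ≤ ε / 2 := by
    intro p hp
    by_contra hcon
    push Not at hcon
    have hpE : p ∉ E := by
      intro h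
      obtain ⟨i, _, h2⟩ := hcon p h
      rw [dist_self] at h2
      linarith
    have := hmax (insert p E) ⟨Finset.insert_subset hp hE.1, ?_⟩
    · rw [Finset.card_insert_of_notMem hpE] at this
      omega
    · intro x hx y hy hxy
      rcases Finset.mem_insert.1 hx with rfl | hx' <;> rcases Finset.mem_insert.1 hy with rfl | hy'
      · rfl
      · obtain ⟨i, hi, h2⟩ := hcon y hy'
        linarith [hxy i hi]
      · obtain ⟨i, hi, h2⟩ := hcon x hx'
        have := hxy i hi
        rw [dist_comm] at this
        linarith
      · exact hE.2 x hx' y hy' hxy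
  intro x
  obtain ⟨p, hp, h1⟩ := hP x
  obtain ⟨e, he, h2⟩ := key p hp
  refine ⟨e, he, fun i hi => ?_⟩
  linarith [dist_triangle (T^[i] x) (T^[i] p) (T^[i] e), h1 i hi, h2 i hi]

set_option maxHeartbeats 1000000 in
open Classical in
lemma lower_L [CompactSpace X] [Nonempty X] (T : X → X) (hT : Continuous T) {ε : ℝ} (hε : 0 < ε)
    (C : Finset X) (hC : ∀ x : X, ∃ c ∈ C, dist x c ≤ ε / 8) (R : ℕ) (hR : 1 ≤ R)
    (η : ℝ) (hη : 0 < η) (hη1 : η ≤ 1) (S : Finset ℕ) (D L : ℕ) (hD : ∀ s ∈ S, s ≤ D) :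
    S.card * (Real.log (spaN T (Finset.range L) ε) - D * Real.log (2 ^ C.card)) ≤
      L * (Real.log (spaN T S (ε / (24 * R))) + S.card * Real.log (1 + η))
      + Real.log (2 ^ C.card / η) * (S.card * (C.card * (L + D) / R)) := by
  have hR0 : (0:ℝ) < R := by exact_mod_cast hR
  set δ : ℝ := ε / (24 * R) with hδdef
  have hδ : 0 < δ := by positivity
  have hδR : 3 * δ * R = ε / 8 := by rw [hδdef]; field_simp; norm_num
  obtain ⟨E, hE1, hE2⟩ := exists_sep T hT (Finset.range L) hε
  obtain ⟨G, hG1, hG2⟩ := spaN_spec T hT S hδ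
  obtain ⟨e0, he0⟩ := hE1.nonempty
  obtain ⟨g0, hg0⟩ := hG2.nonempty
  have : Nonempty E := ⟨⟨e0, he0⟩⟩
  have : Nonempty G := ⟨⟨g0, hg0⟩⟩
  have hγ : ∀ x : X, ∃ g : G, ∀ i ∈ S, dist (T^[i] x) (T^[i] g) ≤ δ := by
    intro x
    obtain ⟨g, hg, h⟩ := hG2 x
    exact ⟨⟨g, hg⟩, h⟩
  choose γ hγ using hγ
  let rr : ℕ → ℝ := fun l => ε / 8 + 3 * δ * l
  let name : ℕ → X → Finset C := fun l y => Finset.univ.filter (fun c : C => dist y c ≤ rr l)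
  let bad : ℕ → ℕ → E → Prop := fun l j x => ∃ c : C, |dist (T^[j] (x : X)) c - rr l| ≤ δ
  -- choice of the radius
  have hcount : ∀ j (x : E), ∑ l ∈ Finset.range R, (if bad l j x then (1:ℝ) else 0) ≤ C.card := by
    intro j x
    calc ∑ l ∈ Finset.range R, (if bad l j x then (1:ℝ) else 0)
        ≤ ∑ l ∈ Finset.range R, ∑ c : C,
            (if |dist (T^[j] (x : X)) c - rr l| ≤ δ then (1:ℝ) else 0) := by
          apply Finset.sum_le_sum
          intro l _
          have hnn : ∀ c ∈ (Finset.univ : Finset C),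
            (0:ℝ) ≤ (if |dist (T^[j] (x : X)) c - rr l| ≤ δ then (1:ℝ) else 0) := by
            intro c _
            split_ifs <;> norm_num
          split_ifs with hb
          · obtain ⟨c, hc⟩ := hb
            refine le_trans ?_ (Finset.single_le_sum hnn (Finset.mem_univ c))
            rw [if_pos hc]
          · exact Finset.sum_nonneg hnn
      _ = ∑ c : C, ∑ l ∈ Finset.range R,
            (if |dist (T^[j] (x : X)) c - rr l| ≤ δ then (1:ℝ) else 0) := Finset.sum_comm
      _ ≤ ∑ c : C, (1:ℝ) := by
          apply Finset.sum_le_sum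
          intro c _
          rw [Finset.sum_boole]
          have : (Finset.filter (fun l => |dist (T^[j] (x : X)) c - rr l| ≤ δ)
              (Finset.range R)).card ≤ 1 := by
            rw [Finset.card_le_one]
            intro l hl l' hl'
            have h1 := abs_le.1 (Finset.mem_filter.1 hl).2
            have h2 := abs_le.1 (Finset.mem_filter.1 hl').2
            simp only [rr] at h1 h2
            by_contra hne
            rcases Nat.lt_or_gt_of_ne hne with h | h
            · have : (l:ℝ) + 1 ≤ l' := by exact_mod_cast h
              nlinarith
            · have : (l':ℝ) + 1 ≤ l := by exact_mod_cast h
              nlinarith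
          exact_mod_cast this
      _ = C.card := by simp
  have htot : ∑ l ∈ Finset.range R, (∑ x, ∑ j ∈ Finset.range (L + D),
      if bad l j x then (1:ℝ) else 0) ≤ ∑ l ∈ Finset.range R,
        (Fintype.card E * (C.card * (L + D) / R) : ℝ) := by
    rw [Finset.sum_comm]
    have : ∀ x : E, ∑ l ∈ Finset.range R, ∑ j ∈ Finset.range (L + D),
        (if bad l j x then (1:ℝ) else 0) ≤ (L + D) * C.card := by
      intro x
      rw [Finset.sum_comm]
      refine (Finset.sum_le_sum fun j _ => hcount j x).trans ?_
      simp
    refine (Finset.sum_le_sum fun x _ => this x).trans (le_of_eq ?_)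
    simp only [Finset.sum_const, Finset.card_univ, nsmul_eq_mul, Finset.card_range]
    field_simp
  obtain ⟨l, hl, hbadl⟩ := Finset.exists_le_of_sum_le
    (⟨0, Finset.mem_range.2 (by omega)⟩ : (Finset.range R).Nonempty) htot
  have hlR : (l:ℝ) + 1 ≤ R := by exact_mod_cast Finset.mem_range.1 hl
  have hr1 : ε / 8 ≤ rr l := by simp only [rr]; nlinarith [Nat.cast_nonneg (α := ℝ) l]
  have hr2 : rr l ≤ ε / 4 := by simp only [rr]; nlinarith
  have main := core_main (Ω := E) (κ := Finset C) (Γ := G) (fun j x => name l (T^[j] (x : X)))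
    S D L hD (fun g s => name l (T^[s] (g : X))) (fun a x => γ (T^[a] (x : X))) (bad l) (by
      intro a s hs x hb
      have h1 := hγ (T^[a] (x : X)) s hs
      rw [← Function.iterate_add_apply, add_comm s a] at h1
      simp only [bad, not_exists, not_le] at hb
      ext c
      simp only [name, Finset.mem_filter, Finset.mem_univ, true_and]
      have h2 := hb c
      have h3 := dist_triangle (T^[a + s] (x : X)) (T^[s] (γ (T^[a] (x : X)) : X)) c
      have h4 := dist_triangle_left (T^[s] (γ (T^[a] (x : X)) : X)) c (T^[a + s] (x : X))
      rcases lt_abs.1 h2 with h5 | h5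
      · constructor <;> intro h6 <;> linarith
      · constructor <;> intro h6 <;> linarith) (by
      intro x y hxy
      apply Subtype.ext
      apply hE2 x x.2 y y.2
      intro i hi
      have h1 := hxy i (Finset.mem_range.1 hi)
      obtain ⟨c, hc, h2⟩ := hC (T^[i] (x : X))
      have h3 : (⟨c, hc⟩ : C) ∈ name l (T^[i] (x : X)) := by
        simp only [name, Finset.mem_filter, Finset.mem_univ, true_and]
        linarith
      have h4 := h3
      rw [h1] at h4
      simp only [name, Finset.mem_filter, Finset.mem_univ, true_and] at h3 h4
      linarith [dist_triangle_right (T^[i] (x : X)) (T^[i] (y : X)) c]) η hη hη1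
  simp only [Fintype.card_finset, Fintype.card_coe, Nat.cast_pow, Nat.cast_ofNat] at main hbadl
  have hlog : 0 ≤ Real.log (2 ^ C.card / η) := by
    apply Real.log_nonneg
    rw [one_le_div hη]
    have : (1:ℝ) ≤ 2 ^ C.card := one_le_pow₀ (by norm_num)
    linarith
  rw [hG1] at main
  have hEpos : (0:ℝ) < E.card := by exact_mod_cast Finset.card_pos.2 ⟨e0, he0⟩
  have hEspan : Real.log (spaN T (Finset.range L) ε) ≤ Real.log E.card := by
    apply Real.log_le_log
    · exact_mod_cast spaN_pos T hT _ hε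
    · exact_mod_cast spaN_le hE1
  have hbadl2 : (∑ x, ∑ j ∈ Finset.range (L + D),
      @ite ℝ (bad l j x) (Classical.propDecidable _) 1 0) ≤ E.card * (C.card * (L + D) / R) := by
    refine le_trans (le_of_eq ?_) hbadl
    refine Finset.sum_congr rfl fun x _ => Finset.sum_congr rfl fun j _ => ?_
    by_cases hb : bad l j x
    · rw [if_pos hb, if_pos hb]
    · rw [if_neg hb, if_neg hb]
  have m1 := mul_le_mul_of_nonneg_left
    (mul_le_mul_of_nonneg_left hbadl2 (Nat.cast_nonneg (α := ℝ) S.card)) hlog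
  have m2 := mul_le_mul_of_nonneg_left
    (mul_le_mul_of_nonneg_left hEspan (Nat.cast_nonneg (α := ℝ) S.card)) hEpos.le
  refine le_of_mul_le_mul_left ?_ hEpos
  have m3 := main.trans (add_le_add le_rfl m1)
  clear m1 main hbadl hbadl2 htot hcount
  generalize Real.log (2 ^ C.card / η) = u at *
  generalize Real.log (2 ^ C.card) = v at *
  linarith

lemma lower_fin [CompactSpace X] [Nonempty X] (T : X → X) (hT : Continuous T) {ε : ℝ} (hε : 0 < ε)
    (h θ : ℝ) (hθ : 0 < θ)
    (hfreq : ∃ᶠ L : ℕ in atTop, h * L ≤ Real.log (spaN T (Finset.range L) ε)) :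
    ∃ δ > 0, ∀ S : Finset ℕ, S.card * (h - θ) ≤ Real.log (spaN T S δ) := by
  obtain ⟨C, hC⟩ := exists_spans T hT {0} (by positivity : 0 < ε / 8)
  have hC' : ∀ x : X, ∃ c ∈ C, dist x c ≤ ε / 8 := by
    intro x
    obtain ⟨c, hc, h⟩ := hC x
    exact ⟨c, hc, by simpa using h⟩
  set η : ℝ := min (θ / 4) 1 with hηd
  have hη : 0 < η := lt_min (by positivity) one_pos
  have hη1 : η ≤ 1 := min_le_right _ _
  have hηθ : η ≤ θ / 4 := min_le_left _ _
  have hlogη : Real.log (1 + η) ≤ θ / 4 := by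
    have := Real.log_le_sub_one_of_pos (by linarith : 0 < 1 + η)
    linarith
  set K := Real.log (2 ^ C.card / η) with hK
  obtain ⟨R0, hR0⟩ := exists_nat_ge (4 * C.card * K / θ)
  set R := R0 + 1
  have hRpos : (0:ℝ) < R := by positivity
  have hRK : K * C.card / R ≤ θ / 4 := by
    have : 4 * C.card * K / θ ≤ R := hR0.trans (by simp [R])
    rw [div_le_iff₀ hθ] at this
    rw [div_le_iff₀ hRpos]
    linarith
  refine ⟨ε / (24 * R), by positivity, fun S => ?_⟩
  set D := S.sup id
  have hD : ∀ s ∈ S, s ≤ D := fun s hs => Finset.le_sup (f := id) hs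
  obtain ⟨L0, hL0⟩ := exists_nat_ge (D * (Real.log (2 ^ C.card) + θ / 4) / (θ / 2))
  obtain ⟨L, hL, hL1⟩ := (hfreq.and_eventually (eventually_ge_atTop (L0 + 1))).exists
  have hLpos : (0:ℝ) < L := by exact_mod_cast (by omega : 0 < L)
  have hL2 : D * (Real.log (2 ^ C.card) + θ / 4) ≤ L * (θ / 2) := by
    have : (L0:ℝ) ≤ L := by exact_mod_cast (by omega : L0 ≤ L)
    rw [div_le_iff₀ (by positivity)] at hL0
    nlinarith
  have main := lower_L T hT hε C hC' R (by omega) η hη hη1 S D L hD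
  rw [← hK] at main
  obtain ⟨s, hsd⟩ : ∃ s : ℝ, s = (S.card : ℝ) := ⟨_, rfl⟩
  rw [← hsd] at main ⊢
  have hs : 0 ≤ s := hsd ▸ Nat.cast_nonneg _
  have e1 : K * (s * (C.card * (L + D) / R)) ≤ s * ((L + D) * (θ / 4)) := by
    have : K * (s * (C.card * (L + D) / R)) = s * ((L + D) * (K * C.card / R)) := by ring
    rw [this]
    gcongr
  have e2 : (L:ℝ) * (s * Real.log (1 + η)) ≤ L * (s * (θ / 4)) := by gcongr
  have e3 := mul_le_mul_of_nonneg_left hL hs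
  have e4 := mul_le_mul_of_nonneg_left hL2 hs
  refine le_of_mul_le_mul_left ?_ hLpos
  linarith

end Span

section Final

lemma image_pred (n : ℕ) : (Finset.Icc 1 n).image (fun i => i - 1) = Finset.range n := by
  ext x
  simp only [Finset.mem_image, Finset.mem_Icc, Finset.mem_range]
  constructor
  · rintro ⟨i, hi, rfl⟩; omega
  · intro h; exact ⟨x + 1, by omega, by omega⟩

lemma limsup_coe_nonneg (f : ℕ → ℝ) (hf : ∀ n, 0 ≤ f n) :
    (0 : EReal) ≤ limsup (fun n => ((f n : ℝ) : EReal)) atTop := by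
  apply le_limsup_of_frequently_le
  · exact Eventually.frequently (Eventually.of_forall fun n => by exact_mod_cast hf n)
  · isBoundedDefault

lemma seqEntTop_nonneg (T : X → X) (A : ℕ → ℕ) : 0 ≤ seqEntTop T A := by
  unfold seqEntTop
  refine le_trans ?_ (le_iSup₂ (f := fun (ε : ℝ) (_ : 0 < ε) => Filter.limsup
      (fun n : ℕ =>
        ((Real.log (spaN T ((Finset.Icc 1 n).image A) ε) / n : ℝ) : EReal))
      Filter.atTop) 1 one_pos)
  exact limsup_coe_nonneg _ fun n => div_nonneg (log_spaN_nonneg _ _ _) (Nat.cast_nonneg _)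

open Pointwise in
lemma KA_nonneg (A : ℕ → ℕ) : 0 ≤ KA A := by
  unfold KA
  refine le_trans ?_ (le_iSup (fun m : ℕ => Filter.limsup
    (fun n : ℕ =>
      (((((Finset.Icc 1 n).image A + Finset.range m).card : ℝ) / n : ℝ) : EReal))
    Filter.atTop) 0)
  exact limsup_coe_nonneg _ fun n => by positivity

lemma htopN_eq (T : X → X) : htopN T = ⨆ (ε : ℝ) (_ : 0 < ε),
    Filter.limsup (fun n : ℕ => ((Real.log (spaN T (Finset.range n) ε) / n : ℝ) : EReal))
      Filter.atTop := by
  unfold htopN seqEntTop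
  simp_rw [image_pred]

open Pointwise in
lemma lower_top [CompactSpace X] [Nonempty X] (T : X → X) (hT : Continuous T) (A : ℕ → ℕ) :
    KA A * htopN T ≤ seqEntTop T A := by
  apply EReal.mul_le_of_forall_lt_of_nonneg (KA_nonneg A) (seqEntTop_nonneg T A)
  rintro a ⟨ha0, haK⟩ b ⟨hb0, hbh⟩
  lift a to ℝ using ⟨(haK.trans_le le_top).ne, (EReal.bot_lt_zero.trans ha0).ne'⟩
  lift b to ℝ using ⟨(hbh.trans_le le_top).ne, (EReal.bot_lt_zero.trans hb0).ne'⟩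
  have ha : 0 < a := by exact_mod_cast ha0
  have hb : 0 < b := by exact_mod_cast hb0
  rw [htopN_eq] at hbh
  obtain ⟨ε, hbh⟩ := lt_iSup_iff.1 hbh
  obtain ⟨hε, hbh⟩ := lt_iSup_iff.1 hbh
  obtain ⟨m, haK⟩ := lt_iSup_iff.1 haK
  obtain ⟨h, hbh1, hbh2⟩ := EReal.lt_iff_exists_real_btwn.1 hbh
  have hbh1 : b < h := by exact_mod_cast hbh1
  have hfreq : ∃ᶠ L : ℕ in atTop, h * L ≤ Real.log (spaN T (Finset.range L) ε) := by
    refine ((frequently_lt_of_lt_limsup (by isBoundedDefault) hbh2).and_eventually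
      (eventually_gt_atTop 0)).mono ?_
    rintro n ⟨hn, hn0⟩
    have hn : h < Real.log (spaN T (Finset.range n) ε) / n := by exact_mod_cast hn
    rw [lt_div_iff₀ (by exact_mod_cast hn0)] at hn
    exact hn.le
  obtain ⟨δ, hδ, hS⟩ := lower_fin T hT hε h (h - b) (by linarith) hfreq
  obtain ⟨δ', hδ', hF⟩ := thicken T hT m hδ
  unfold seqEntTop
  refine le_trans ?_ (le_iSup₂ (f := fun (ε : ℝ) (_ : 0 < ε) => Filter.limsup
      (fun n : ℕ =>
        ((Real.log (spaN T ((Finset.Icc 1 n).image A) ε) / n : ℝ) : EReal))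
      Filter.atTop) δ' hδ')
  apply le_limsup_of_frequently_le
  · refine ((frequently_lt_of_lt_limsup (by isBoundedDefault) haK).and_eventually
      (eventually_gt_atTop 0)).mono ?_
    rintro n ⟨hn, hn0⟩
    have hn0' : (0:ℝ) < n := by exact_mod_cast hn0
    have hn := EReal.coe_lt_coe_iff.1 hn
    rw [lt_div_iff₀ hn0'] at hn
    rw [← EReal.coe_mul, EReal.coe_le_coe_iff, le_div_iff₀ hn0']
    have h1 := hS ((Finset.Icc 1 n).image A + Finset.range m)
    have h2 : Real.log (spaN T ((Finset.Icc 1 n).image A + Finset.range m) δ) ≤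
        Real.log (spaN T ((Finset.Icc 1 n).image A) δ') := by
      apply Real.log_le_log
      · exact_mod_cast spaN_pos T hT _ hδ
      · exact_mod_cast hF _
    nlinarith
  · isBoundedDefault

open Pointwise in
lemma heps_ne_top [CompactSpace X] [Nonempty X] (T : X → X) (hT : Continuous T) {ε : ℝ}
    (hε : 0 < ε) : Filter.limsup
      (fun n : ℕ => ((Real.log (spaN T (Finset.range n) ε) / n : ℝ) : EReal)) atTop ≠ ⊤ := by
  have h : Filter.limsup
      (fun n : ℕ => ((Real.log (spaN T (Finset.range n) ε) / n : ℝ) : EReal)) atTop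
      ≤ ((Real.log (spaN T (Finset.range 1) (ε / 2)) : ℝ) : EReal) := by
    apply limsup_le_of_le
    · isBoundedDefault
    · filter_upwards [eventually_gt_atTop 0] with n hn
      rw [EReal.coe_le_coe_iff, div_le_iff₀ (by exact_mod_cast hn)]
      have := upper_fin T hT (Finset.range n) 1 le_rfl (by positivity : 0 < ε / 2)
      rw [mul_div_cancel₀ _ (by norm_num : (2:ℝ) ≠ 0)] at this
      have hr : Finset.range n + Finset.range 1 = Finset.range n := by
        rw [Finset.range_one, Finset.singleton_zero, add_zero]
      rw [hr, Finset.card_range, Nat.cast_one, div_one] at this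
      linarith
  exact (h.trans_lt (EReal.coe_lt_top _)).ne

open Pointwise in
lemma upper_top [CompactSpace X] [Nonempty X] (T : X → X) (hT : Continuous T) (A : ℕ → ℕ)
    (hK : KA A ≠ ⊤) : seqEntTop T A ≤ KA A * htopN T := by
  refine iSup₂_le fun ε hε => ?_
  have hε2 : 0 < ε / 2 := by positivity
  set H := Filter.limsup
      (fun n : ℕ => ((Real.log (spaN T (Finset.range n) (ε / 2)) / n : ℝ) : EReal)) atTop with hH
  have hH0 : 0 ≤ H := limsup_coe_nonneg _ fun n =>
    div_nonneg (log_spaN_nonneg _ _ _) (Nat.cast_nonneg _)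
  have hHt : H ≤ htopN T := by
    rw [htopN_eq]
    exact le_iSup₂ (f := fun (ε : ℝ) (_ : 0 < ε) => Filter.limsup
      (fun n : ℕ => ((Real.log (spaN T (Finset.range n) ε) / n : ℝ) : EReal)) atTop) (ε / 2) hε2
  refine le_trans ?_ (mul_le_mul_of_nonneg_left hHt (KA_nonneg A))
  apply EReal.le_mul_of_forall_lt (Or.inr (heps_ne_top T hT hε2)) (Or.inl hK)
  intro a ha b hb
  have ha0 : 0 < a := (KA_nonneg A).trans_lt ha
  have hb0 : 0 < b := hH0.trans_lt hb
  by_cases hat : a = ⊤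
  · rw [hat, EReal.top_mul_of_pos hb0]; exact le_top
  by_cases hbt : b = ⊤
  · rw [hbt, EReal.mul_top_of_pos ha0]; exact le_top
  lift a to ℝ using ⟨hat, (EReal.bot_lt_zero.trans ha0).ne'⟩
  lift b to ℝ using ⟨hbt, (EReal.bot_lt_zero.trans hb0).ne'⟩
  have ha0' : 0 < a := by exact_mod_cast ha0
  have hb0' : 0 < b := by exact_mod_cast hb0
  obtain ⟨m, hm, hm1⟩ := ((eventually_lt_of_limsup_lt hb).and (eventually_ge_atTop 1)).exists
  have hm := EReal.coe_lt_coe_iff.1 hm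
  have hk := (le_iSup (fun m : ℕ => Filter.limsup
    (fun n : ℕ =>
      (((((Finset.Icc 1 n).image A + Finset.range m).card : ℝ) / n : ℝ) : EReal))
    Filter.atTop) m).trans_lt ha
  apply limsup_le_of_le
  · isBoundedDefault
  · filter_upwards [eventually_lt_of_limsup_lt hk, eventually_gt_atTop 0] with n hn hn0
    have hn0' : (0:ℝ) < n := by exact_mod_cast hn0
    have hn := EReal.coe_lt_coe_iff.1 hn
    rw [div_lt_iff₀ hn0'] at hn
    rw [← EReal.coe_mul, EReal.coe_le_coe_iff, div_le_iff₀ hn0']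
    have h1 := upper_fin T hT ((Finset.Icc 1 n).image A) m hm1 hε2
    rw [mul_div_cancel₀ _ (by norm_num : (2:ℝ) ≠ 0)] at h1
    have h2 := mul_le_mul hn.le hm.le (div_nonneg (log_spaN_nonneg T (Finset.range m) (ε / 2))
      (Nat.cast_nonneg _)) (by positivity)
    linarith

end Final

/-- Unless (`K(A) = ∞` and `h_top(T) = 0`), the topological sequence
entropy satisfies: `h^A_top(T) = K(A)·h_top(T)` when both are finite; `h^A_top(T) = ∞`
when `K(A) = ∞, h_top(T) > 0`, or when `K(A) > 0, h_top(T) = ∞`; and `h^A_top(T) = 0`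
when `K(A) = 0` and `h_top(T) = ∞`. -/
theorem stmt5 [CompactSpace X] [Nonempty X] (T : X → X) (hT : Continuous T) (A : ℕ → ℕ) :
    (KA A ≠ ⊤ → htopN T ≠ ⊤ → seqEntTop T A = KA A * htopN T) ∧
    (KA A = ⊤ → 0 < htopN T → seqEntTop T A = ⊤) ∧
    (0 < KA A → htopN T = ⊤ → seqEntTop T A = ⊤) ∧
    (KA A = 0 → htopN T = ⊤ → seqEntTop T A = 0) := by
  have hlow := lower_top T hT A
  refine ⟨fun h1 _ => le_antisymm (upper_top T hT A h1) hlow, fun h1 h2 => ?_, fun h1 h2 => ?_,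
    fun h1 h2 => ?_⟩
  · rw [h1, EReal.top_mul_of_pos h2] at hlow
    exact top_le_iff.1 hlow
  · rw [h2, EReal.mul_top_of_pos h1] at hlow
    exact top_le_iff.1 hlow
  · have := upper_top T hT A (by rw [h1]; exact EReal.zero_ne_top)
    rw [h1, zero_mul] at this
    exact le_antisymm this (seqEntTop_nonneg T A)
end

section
/- Let T be a homeomorphism of a compact metric space X with infinite topological entropy h_top(T) = ∞, and fix m ∈ ℕ. Then for every N ∈ ℕ there exists δ > 0 such that C_m(F)·N ≤ (1/|F|) log spa(T,F,δ) for every finite F ⊂ ℤ. -/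
open Filter

variable {X : Type*} [MetricSpace X]

/-- `spaZ T F ε` : the minimal cardinality of a set `E ⊆ X` such that every `x ∈ X`
satisfies `max_{i ∈ F} dist (T^i x, T^i e) ≤ ε` for some `e ∈ E`, where the iterates
`T^i`, `i ∈ ℤ`, are powers of the homeomorphism `T`. -/
noncomputable def spaZ (T : X ≃ₜ X) (F : Finset ℤ) (ε : ℝ) : ℕ :=
  sInf {k : ℕ | ∃ E : Finset X, E.card = k ∧
    ∀ x : X, ∃ e ∈ E, ∀ i ∈ F, dist ((T.toEquiv ^ i) x) ((T.toEquiv ^ i) e) ≤ ε}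

/-- Topological entropy of a homeomorphism, via spanning sets:
`h_top(T) = lim_{ε→0⁺} limsup_n (1/n) log spa(T,{0,…,n−1},ε)`
(the limit as `ε → 0⁺` of the antitone-in-`ε` quantity is its supremum over `ε > 0`). -/
noncomputable def htopZ (T : X ≃ₜ X) : EReal :=
  ⨆ (ε : ℝ) (_ : 0 < ε),
    Filter.limsup
      (fun n : ℕ =>
        ((Real.log (spaZ T (Finset.Icc 0 ((n : ℤ) - 1)) ε) / n : ℝ) : EReal))
      Filter.atTop

open Pointwise in
/-- `C_m(F) = |F + {0,…,m−1}| / |F|`. -/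
noncomputable def Cm (m : ℕ) (F : Finset ℤ) : ℝ :=
  ((F + Finset.Icc (0 : ℤ) ((m : ℤ) - 1)).card : ℝ) / (F.card : ℝ)

open Pointwise in
/-- `F` has `m`-bounded gaps if `F + {0,…,m−1}` is an interval of integers. -/
def BoundedGaps (m : ℕ) (F : Finset ℤ) : Prop :=
  ∃ a b : ℤ, F + Finset.Icc (0 : ℤ) ((m : ℤ) - 1) = Finset.Icc a b

open Classical in
/-- number of names of points of `A` over the coordinates in `S` -/
noncomputable def nameCard {Ω ι κ : Type*} (Y : ι → Ω → κ) (S : Finset ι) (A : Finset Ω) : ℕ :=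
  (A.image (fun w => fun i : S => Y i w)).card

lemma nameCard_eq {Ω ι κ : Type*} (Y : ι → Ω → κ) (S : Finset ι) (A : Finset Ω)
    [DecidableEq (S → κ)] :
    nameCard Y S A = (A.image (fun w => fun i : S => Y i w)).card := by
  unfold nameCard
  congr!

lemma card_image_le_of_kernel {Ω α β : Type*} [DecidableEq α] [DecidableEq β] (A : Finset Ω)
    (f : Ω → α) (g : Ω → β) (h : ∀ x ∈ A, ∀ y ∈ A, g x = g y → f x = f y) :
    (A.image f).card ≤ (A.image g).card := by
  classical
  have hc : ∀ b : A.image f, ∃ x ∈ A, f x = b.1 := fun b => by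
    simpa using Finset.mem_image.1 b.2
  choose p hpA hp using hc
  rw [← Finset.card_attach (s := A.image f)]
  refine Finset.card_le_card_of_injOn (fun b => g (p b)) ?_ ?_
  · intro b _
    exact Finset.mem_coe.2 (Finset.mem_image_of_mem _ (hpA b))
  · intro b _ c _ hbc
    have := h _ (hpA b) _ (hpA c) hbc
    rw [hp, hp] at this
    exact Subtype.ext this

lemma card_image_pair {Ω α β : Type*} [DecidableEq α] [DecidableEq β] (A : Finset Ω)
    (u : Ω → α) (g : Ω → β) :
    (A.image (fun w => (u w, g w))).card
      = ∑ c ∈ A.image u, ((A.filter (fun w => u w = c)).image g).card := by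
  classical
  rw [Finset.card_eq_sum_card_fiberwise (f := Prod.fst) (t := A.image u)]
  · refine Finset.sum_congr rfl fun c _ => ?_
    have : (A.image (fun w => (u w, g w))).filter (fun p => p.1 = c)
        = ((A.filter (fun w => u w = c)).image g).image (fun b => (c, b)) := by
      ext ⟨a, b⟩
      simp only [Finset.mem_filter, Finset.mem_image, Prod.mk.injEq]
      constructor
      · rintro ⟨⟨w, hw, h1, h2⟩, h3⟩
        exact ⟨b, ⟨w, ⟨hw, h1.trans h3⟩, h2⟩, h3.symm, rfl⟩
      · rintro ⟨b', ⟨w, ⟨hw, h1⟩, h2⟩, h3, h4⟩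
        exact ⟨⟨w, hw, h1.trans h3, h2.trans h4⟩, h3.symm⟩
    rw [this, Finset.card_image_of_injective]
    intro b b' h
    simpa using h
  · intro p hp
    simp only [Finset.coe_image, Set.mem_image, Finset.mem_coe] at hp ⊢
    obtain ⟨w, hw, rfl⟩ := hp
    exact ⟨w, hw, rfl⟩

open Classical in
lemma nameCard_insert {Ω ι κ : Type*} (Y : ι → Ω → κ) (S : Finset ι) (a : ι)
    (A : Finset Ω) :
    nameCard Y (insert a S) A
      = ∑ c ∈ A.image (Y a), nameCard Y S (A.filter (fun w => Y a w = c)) := by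
  unfold nameCard
  rw [← card_image_pair (β := S → κ)]
  apply le_antisymm
  · refine card_image_le_of_kernel A _ _ ?_
    intro x _ y _ h
    simp only [Prod.mk.injEq] at h
    funext ⟨i, hi⟩
    rcases Finset.mem_insert.1 hi with rfl | hi'
    · exact h.1
    · exact congrFun h.2 ⟨i, hi'⟩
  · refine card_image_le_of_kernel A _ _ ?_
    intro x _ y _ h
    simp only [Prod.mk.injEq]
    refine ⟨congrFun h ⟨a, Finset.mem_insert_self _ _⟩, ?_⟩
    funext ⟨i, hi⟩
    exact congrFun h ⟨i, Finset.mem_insert_of_mem hi⟩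

lemma nameCard_mono {Ω ι κ : Type*} (Y : ι → Ω → κ) (S : Finset ι) {A B : Finset Ω}
    (h : A ⊆ B) : nameCard Y S A ≤ nameCard Y S B := by
  classical
  unfold nameCard
  exact Finset.card_le_card (Finset.image_subset_image h)

lemma nameCard_pos {Ω ι κ : Type*} (Y : ι → Ω → κ) (S : Finset ι) {A : Finset Ω}
    (h : A.Nonempty) : 0 < nameCard Y S A := by
  classical
  unfold nameCard
  exact Finset.card_pos.2 (h.image _)

lemma jensen_log {α : Type*} (s : Finset α) (l b : α → ℝ) (hl : ∀ c ∈ s, 0 < l c)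
    (hb : ∀ c ∈ s, 0 < b c) (h1 : ∑ c ∈ s, l c = 1) :
    ∑ c ∈ s, l c * (Real.log (b c) - Real.log (l c)) ≤ Real.log (∑ c ∈ s, b c) := by
  have hs : s.Nonempty := by
    by_contra h
    rw [Finset.not_nonempty_iff_eq_empty] at h
    subst h
    simp at h1
  set B := ∑ c ∈ s, b c with hB
  have hBpos : 0 < B := Finset.sum_pos hb hs
  have key : ∀ c ∈ s, l c * (Real.log (b c) - Real.log (l c)) ≤
      l c * Real.log B + (b c / B - l c) := by
    intro c hc
    have h := Real.log_le_sub_one_of_pos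
      (div_pos (div_pos (hb c hc) (hl c hc)) hBpos)
    rw [Real.log_div (div_pos (hb c hc) (hl c hc)).ne' hBpos.ne',
      Real.log_div (hb c hc).ne' (hl c hc).ne'] at h
    have h2 := mul_le_mul_of_nonneg_left h (hl c hc).le
    have h3 : l c * (b c / l c / B - 1) = b c / B - l c := by
      have := (hl c hc).ne'
      field_simp
    rw [h3] at h2
    linarith
  calc _ ≤ ∑ c ∈ s, (l c * Real.log B + (b c / B - l c)) := Finset.sum_le_sum key
    _ = Real.log B := by
      rw [Finset.sum_add_distrib, Finset.sum_sub_distrib, ← Finset.sum_mul, ← Finset.sum_div,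
        h1, ← hB, div_self hBpos.ne']
      ring

lemma shearer_weights {Ω ι κ : Type*} (Y : ι → Ω → κ) (I : Finset ι) :
    ∀ A : Finset Ω, A.Nonempty → ∃ h : ι → ℝ,
      Real.log (nameCard Y I A) ≤ ∑ i ∈ I, h i ∧
      ∀ S ⊆ I, ∑ i ∈ S, h i ≤ Real.log (nameCard Y S A) := by
  classical
  induction I using Finset.induction_on with
  | empty =>
    intro A hA
    refine ⟨0, ?_, ?_⟩
    · have : nameCard Y ∅ A ≤ 1 := by
        unfold nameCard
        exact Finset.card_le_one_of_subsingleton _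
      have h2 := nameCard_pos Y ∅ hA
      have : nameCard Y ∅ A = 1 := by omega
      simp [this]
    · intro S _
      simpa using Real.log_natCast_nonneg _
  | insert a I ha ih =>
    intro A hA
    set s := A.image (Y a) with hs
    have hne : ∀ c ∈ s, (A.filter (fun w => Y a w = c)).Nonempty := by
      intro c hc
      obtain ⟨w, hw, rfl⟩ := Finset.mem_image.1 hc
      exact ⟨w, by simp [hw]⟩
    have ih' : ∀ c, ∃ h : ι → ℝ, c ∈ s →
        (Real.log (nameCard Y I (A.filter (fun w => Y a w = c))) ≤ ∑ i ∈ I, h i ∧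
        ∀ S ⊆ I, ∑ i ∈ S, h i ≤ Real.log (nameCard Y S (A.filter (fun w => Y a w = c)))) := by
      intro c
      by_cases hc : c ∈ s
      · obtain ⟨h, hh⟩ := ih _ (hne c hc)
        exact ⟨h, fun _ => hh⟩
      · exact ⟨0, fun h => absurd h hc⟩
    choose h hh using ih'
    set n : κ → ℝ := fun c => nameCard Y I (A.filter (fun w => Y a w = c)) with hn
    have hnpos : ∀ c ∈ s, 0 < n c := fun c hc => by
      simpa [hn] using nameCard_pos Y I (hne c hc)
    set N : ℝ := (nameCard Y (insert a I) A : ℝ) with hN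
    have hNsum : N = ∑ c ∈ s, n c := by
      rw [hN, nameCard_insert]; push_cast; rfl
    have hNpos : 0 < N := by simpa [hN] using nameCard_pos Y (insert a I) hA
    set l : κ → ℝ := fun c => n c / N with hl
    have hlpos : ∀ c ∈ s, 0 < l c := fun c hc => div_pos (hnpos c hc) hNpos
    have hl1 : ∑ c ∈ s, l c = 1 := by
      rw [hl, ← Finset.sum_div, ← hNsum, div_self hNpos.ne']
    let H : ι → ℝ := fun i => if i = a then - ∑ c ∈ s, l c * Real.log (l c)
      else ∑ c ∈ s, l c * h c i
    have hHa : H a = - ∑ c ∈ s, l c * Real.log (l c) := by simp [H]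
    have hHS : ∀ S : Finset ι, a ∉ S → ∑ i ∈ S, H i = ∑ c ∈ s, l c * ∑ i ∈ S, h c i := by
      intro S haS
      have : ∀ i ∈ S, H i = ∑ c ∈ s, l c * h c i := by
        intro i hi
        have : i ≠ a := fun h => haS (h ▸ hi)
        simp [H, this]
      rw [Finset.sum_congr rfl this, Finset.sum_comm]
      simp [Finset.mul_sum]
    refine ⟨H, ?_, ?_⟩
    · rw [Finset.sum_insert ha, hHa, hHS I ha, neg_add_eq_sub, ← Finset.sum_sub_distrib]
      calc Real.log N = ∑ c ∈ s, l c * Real.log N := by rw [← Finset.sum_mul, hl1, one_mul]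
        _ ≤ _ := by
          refine Finset.sum_le_sum fun c hc => ?_
          rw [← mul_sub]
          refine mul_le_mul_of_nonneg_left ?_ (hlpos c hc).le
          have := (hh c hc).1
          have h2 : Real.log (l c) = Real.log (n c) - Real.log N :=
            Real.log_div (hnpos c hc).ne' hNpos.ne'
          have h3 : Real.log (n c) ≤ ∑ i ∈ I, h c i := this
          linarith
    · intro S hS
      by_cases haS : a ∈ S
      · obtain ⟨S', haS', rfl⟩ : ∃ S', a ∉ S' ∧ S = insert a S' :=
          ⟨S.erase a, Finset.notMem_erase _ _, (Finset.insert_erase haS).symm⟩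
        have hS' : S' ⊆ I := by
          intro i hi
          rcases Finset.mem_insert.1 (hS (Finset.mem_insert_of_mem hi)) with rfl | h
          · exact absurd hi haS'
          · exact h
        rw [Finset.sum_insert haS', hHa, hHS S' haS', neg_add_eq_sub, ← Finset.sum_sub_distrib,
          nameCard_insert]
        push_cast
        refine le_trans ?_ (jensen_log s l _ hlpos ?_ hl1)
        · refine Finset.sum_le_sum fun c hc => ?_
          rw [← mul_sub]
          refine mul_le_mul_of_nonneg_left ?_ (hlpos c hc).le
          linarith [(hh c hc).2 S' hS']
        · intro c hc
          exact_mod_cast nameCard_pos Y S' (hne c hc)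
      · have hS' : S ⊆ I := by
          intro i hi
          rcases Finset.mem_insert.1 (hS hi) with rfl | h
          · exact absurd hi haS
          · exact h
        rw [hHS S haS]
        calc _ ≤ ∑ c ∈ s, l c * Real.log (nameCard Y S A) := by
              refine Finset.sum_le_sum fun c hc => ?_
              refine mul_le_mul_of_nonneg_left ?_ (hlpos c hc).le
              refine ((hh c hc).2 S hS').trans ?_
              refine Real.log_le_log ?_ ?_
              · exact_mod_cast nameCard_pos Y S (hne c hc)
              · exact_mod_cast nameCard_mono Y S (Finset.filter_subset _ _)
          _ = _ := by rw [← Finset.sum_mul, hl1, one_mul]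

/-- Shearer for translates of `F` on the interval `[0,n)`. -/
lemma shearer_translates {Ω κ : Type*} (Y : ℤ → Ω → κ) (A : Finset Ω) (hA : A.Nonempty)
    (F : Finset ℤ) (L n : ℕ) (hL : ∀ s ∈ F, |s| ≤ L) (K : ℝ)
    (hK : ∀ t : ℤ, Real.log (nameCard Y
      ((Finset.Icc 0 ((n : ℤ) - 1)).filter (fun i => i - t ∈ F)) A) ≤ K) :
    F.card * Real.log (nameCard Y (Finset.Icc 0 ((n : ℤ) - 1)) A) ≤ (n + 2 * L + 1) * K := by
  classical
  obtain ⟨h, h1, h2⟩ := shearer_weights Y (Finset.Icc 0 ((n : ℤ) - 1)) A hA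
  set I := Finset.Icc 0 ((n : ℤ) - 1) with hI
  set J := Finset.Icc (-(L : ℤ)) (n + L) with hJ
  have e1 : ∑ t ∈ J, ∑ i ∈ I.filter (fun i => i - t ∈ F), h i = F.card * ∑ i ∈ I, h i := by
    simp_rw [Finset.sum_filter]
    rw [Finset.sum_comm, Finset.mul_sum]
    refine Finset.sum_congr rfl fun i hi => ?_
    rw [← Finset.sum_filter, Finset.sum_const, nsmul_eq_mul]
    congr 2
    refine Finset.card_bij' (fun t _ => i - t) (fun s _ => i - s) ?_ ?_ ?_ ?_
    · intro t ht; exact (Finset.mem_filter.1 ht).2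
    · intro s hs
      have := abs_le.1 (hL s hs)
      rw [hI, Finset.mem_Icc] at hi
      simp only [hJ, Finset.mem_filter, Finset.mem_Icc, sub_sub_cancel]
      refine ⟨⟨by omega, by omega⟩, hs⟩
    · intros; simp
    · intros; simp
  have e2 : ∑ t ∈ J, ∑ i ∈ I.filter (fun i => i - t ∈ F), h i ≤ ∑ t ∈ J, K :=
    Finset.sum_le_sum fun t _ => (h2 _ (Finset.filter_subset _ _)).trans (hK t)
  have e3 : (J.card : ℝ) = n + 2 * L + 1 := by
    rw [hJ, Int.card_Icc]
    have : ((n : ℤ) + L + 1 - -(L : ℤ)).toNat = n + 2 * L + 1 := by omega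
    rw [this]; push_cast; ring
  rw [e1, Finset.sum_const, nsmul_eq_mul, e3] at e2
  exact (mul_le_mul_of_nonneg_left h1 (Nat.cast_nonneg _)).trans e2

lemma continuous_zpow_equiv (T : X ≃ₜ X) (i : ℤ) : Continuous (fun x => (T.toEquiv ^ i) x) := by
  have hn : ∀ n : ℕ, Continuous (fun x => (T.toEquiv ^ n) x) := by
    intro n
    induction n with
    | zero => simpa using continuous_id'
    | succ n ih =>
      simp only [pow_succ, Equiv.Perm.mul_apply]
      exact ih.comp T.continuous
  have hn' : ∀ n : ℕ, Continuous (fun x => ((T.toEquiv ^ n)⁻¹) x) := by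
    intro n
    induction n with
    | zero => simpa using continuous_id'
    | succ n ih =>
      simp only [pow_succ', mul_inv_rev, Equiv.Perm.mul_apply]
      exact ih.comp T.symm.continuous
  cases i with
  | ofNat n => simpa using hn n
  | negSucc n => simpa only [zpow_negSucc] using hn' (n + 1)

lemma exists_unif [CompactSpace X] (T : X ≃ₜ X) (G : Finset ℤ) (ε : ℝ) (hε : 0 < ε) :
    ∃ δ : ℝ, 0 < δ ∧ ∀ x y : X, dist x y ≤ δ →
      ∀ i ∈ G, dist ((T.toEquiv ^ i) x) ((T.toEquiv ^ i) y) ≤ ε := by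
  classical
  induction G using Finset.induction_on with
  | empty => exact ⟨1, one_pos, by simp⟩
  | insert a G ha ih =>
    obtain ⟨δ, hδ, h⟩ := ih
    obtain ⟨δ', hδ', h'⟩ := Metric.uniformContinuous_iff.1
      (CompactSpace.uniformContinuous_of_continuous (continuous_zpow_equiv T a)) ε hε
    refine ⟨min δ (δ' / 2), by positivity, fun x y hxy i hi => ?_⟩
    rcases Finset.mem_insert.1 hi with rfl | hi
    · exact (h' (lt_of_le_of_lt (hxy.trans (min_le_right _ _)) (by linarith))).le
    · exact h x y (hxy.trans (min_le_left _ _)) i hi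

lemma exists_net [CompactSpace X] (δ : ℝ) (hδ : 0 < δ) :
    ∃ E : Finset X, ∀ x : X, ∃ e ∈ E, dist x e < δ := by
  obtain ⟨t, hf, ht⟩ := Metric.totallyBounded_iff.1 (isCompact_univ (X := X)).totallyBounded
    δ hδ
  refine ⟨hf.toFinset, fun x => ?_⟩
  have := ht (Set.mem_univ x)
  simp only [Set.mem_iUnion, Metric.mem_ball, exists_prop] at this
  obtain ⟨y, hy, h⟩ := this
  exact ⟨y, by simpa using hy, h⟩

lemma spaZ_spec [CompactSpace X] (T : X ≃ₜ X) (F : Finset ℤ) (ε : ℝ) (hε : 0 < ε) :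
    ∃ E : Finset X, E.card = spaZ T F ε ∧
    ∀ x : X, ∃ e ∈ E, ∀ i ∈ F, dist ((T.toEquiv ^ i) x) ((T.toEquiv ^ i) e) ≤ ε := by
  obtain ⟨δ, hδ, h⟩ := exists_unif T F ε hε
  obtain ⟨E, hE⟩ := exists_net (X := X) δ hδ
  have : {k : ℕ | ∃ E : Finset X, E.card = k ∧
    ∀ x : X, ∃ e ∈ E, ∀ i ∈ F,
      dist ((T.toEquiv ^ i) x) ((T.toEquiv ^ i) e) ≤ ε}.Nonempty := by
    refine ⟨E.card, E, rfl, fun x => ?_⟩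
    obtain ⟨e, he, hd⟩ := hE x
    exact ⟨e, he, h x e hd.le⟩
  exact Nat.sInf_mem this

lemma spaZ_le (T : X ≃ₜ X) (F : Finset ℤ) (ε : ℝ) (E : Finset X)
    (h : ∀ x : X, ∃ e ∈ E, ∀ i ∈ F, dist ((T.toEquiv ^ i) x) ((T.toEquiv ^ i) e) ≤ ε) :
    spaZ T F ε ≤ E.card := Nat.sInf_le ⟨E, rfl, h⟩

lemma spaZ_pos [CompactSpace X] [Nonempty X] (T : X ≃ₜ X) (F : Finset ℤ) (ε : ℝ) (hε : 0 < ε) :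
    0 < spaZ T F ε := by
  obtain ⟨E, hE, h⟩ := spaZ_spec T F ε hε
  obtain ⟨e, he, -⟩ := h (Classical.arbitrary X)
  rw [← hE]
  exact Finset.card_pos.2 ⟨e, he⟩

/-- separated set at least as large as the spanning number -/
lemma exists_separated [CompactSpace X] (T : X ≃ₜ X) (F : Finset ℤ) (ε : ℝ) (hε : 0 < ε) :
    ∃ E : Finset X, spaZ T F ε ≤ E.card ∧
    ∀ x ∈ E, ∀ y ∈ E, (∀ i ∈ F, dist ((T.toEquiv ^ i) x) ((T.toEquiv ^ i) y) ≤ ε) → x = y := by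
  classical
  set P : Finset X → Prop := fun E => ∀ x ∈ E, ∀ y ∈ E,
    (∀ i ∈ F, dist ((T.toEquiv ^ i) x) ((T.toEquiv ^ i) y) ≤ ε) → x = y with hP
  obtain ⟨S, hScard, hS⟩ := spaZ_spec T F (ε / 2) (by positivity)
  have hbd : ∀ E, P E → E.card ≤ S.card := by
    intro E hE
    choose g hgS hg using hS
    refine Finset.card_le_card_of_injOn g (fun x _ => hgS x) ?_
    intro x hx y hy hxy
    refine hE x hx y hy fun i hi => ?_
    have h1 := hg x i hi
    have h2 := hg y i hi
    rw [← hxy] at h2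
    have := dist_triangle_right ((T.toEquiv ^ i) x) ((T.toEquiv ^ i) y) ((T.toEquiv ^ i) (g x))
    linarith
  have hex : ∃ k, (∃ E, P E ∧ E.card = k) := ⟨0, ∅, by simp [hP], rfl⟩
  obtain ⟨k, ⟨E, hE, hk⟩, hmax⟩ : ∃ k, (∃ E, P E ∧ E.card = k) ∧ ∀ E, P E → E.card ≤ k := by
    refine ⟨Nat.findGreatest (fun k => ∃ E, P E ∧ E.card = k) S.card, ?_, ?_⟩
    · exact Nat.findGreatest_spec (P := fun k => ∃ E, P E ∧ E.card = k) (m := 0) (Nat.zero_le _)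
        ⟨∅, by simp [hP], rfl⟩
    · intro E hE
      exact Nat.le_findGreatest (hbd E hE) ⟨E, hE, rfl⟩
  refine ⟨E, spaZ_le T F ε E fun x => ?_, hE⟩
  by_contra hcon
  push Not at hcon
  have hxE : x ∉ E := by
    intro hx
    obtain ⟨i, hi, h⟩ := hcon x hx
    simp at h
    linarith
  have hP' : P (insert x E) := by
    intro y hy z hz hyz
    rcases Finset.mem_insert.1 hy with hy1 | hy1 <;> rcases Finset.mem_insert.1 hz with hz1 | hz1
    · rw [hy1, hz1]
    · subst hy1
      obtain ⟨i, hi, h⟩ := hcon z hz1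
      exact absurd (hyz i hi) (not_le.2 h)
    · subst hz1
      obtain ⟨i, hi, h⟩ := hcon y hy1
      have := hyz i hi
      rw [dist_comm] at this
      exact absurd this (not_le.2 h)
    · exact hE y hy1 z hz1 hyz
  have := hmax _ hP'
  rw [Finset.card_insert_of_notMem hxE] at this
  omega

/-- A family of `R` roundings with values in `Fin k`, with bad sets such that each point
is bad for at most `k` of the roundings. -/
lemma exists_roundings [CompactSpace X] [Nonempty X] (ε : ℝ) (hε : 0 < ε) :
    ∃ (k : ℕ) (_ : 0 < k), ∀ (R : ℕ) (_ : 0 < R), ∃ (δ : ℝ) (_ : 0 < δ)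
      (ρ : ℕ → X → Fin k) (bad : ℕ → X → Prop),
      (∀ q < R, ∀ x y, ρ q x = ρ q y → dist x y ≤ ε) ∧
      (∀ q x y, ¬ bad q x → dist x y ≤ δ → ρ q x = ρ q y) ∧
      (∀ x, ∀ B : Finset ℕ, (∀ q ∈ B, bad q x) → B.card ≤ k) := by
  classical
  obtain ⟨E, hE⟩ := exists_net (X := X) (ε / 4) (by positivity)
  have hEne : E.Nonempty := by
    obtain ⟨e, he, -⟩ := hE (Classical.arbitrary X)
    exact ⟨e, he⟩
  have hkpos : 0 < E.card := Finset.card_pos.2 hEne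
  let c : Fin E.card → X := fun j => (E.equivFin.symm j).1
  have hc : ∀ x, ∃ j, dist x (c j) < ε / 4 := by
    intro x
    obtain ⟨e, he, h⟩ := hE x
    exact ⟨E.equivFin ⟨e, he⟩, by simpa [c] using h⟩
  refine ⟨E.card, hkpos, fun R hR => ?_⟩
  have hR' : (0 : ℝ) < R := by exact_mod_cast hR
  set δ : ℝ := ε / (12 * R) with hδ
  have hδpos : 0 < δ := by positivity
  set r : ℕ → ℝ := fun q => ε / 4 + 3 * δ * q with hr
  have hrlow : ∀ q, ε / 4 ≤ r q := fun q => by simp only [hr]; nlinarith [q.cast_nonneg (α := ℝ)]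
  have hrup : ∀ q < R, r q ≤ ε / 2 := fun q hq => by
    have h1 : (q : ℝ) ≤ R := by exact_mod_cast hq.le
    have h2 : δ * R = ε / 12 := by rw [hδ]; field_simp
    simp only [hr]; nlinarith
  let C : ℕ → X → Finset (Fin E.card) := fun q x => Finset.univ.filter fun j => dist x (c j) < r q
  have hC : ∀ q x, (C q x).Nonempty := fun q x => by
    obtain ⟨j, hj⟩ := hc x
    exact ⟨j, by simpa [C] using hj.trans_le (hrlow q)⟩
  refine ⟨δ, hδpos, fun q x => (C q x).min' (hC q x),
    fun q x => ∃ j, |dist x (c j) - r q| ≤ δ, ?_, ?_, ?_⟩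
  · intro q hq x y hxy
    have h1 : (C q x).min' (hC q x) ∈ C q x := Finset.min'_mem _ _
    have h2 : (C q y).min' (hC q y) ∈ C q y := Finset.min'_mem _ _
    simp only at hxy
    rw [← hxy] at h2
    simp only [C, Finset.mem_filter, Finset.mem_univ, true_and] at h1 h2
    have := hrup q hq
    have := dist_triangle_right x y (c ((C q x).min' (hC q x)))
    simp only [C] at this
    linarith
  · intro q x y hb hxy
    push Not at hb
    have : C q x = C q y := by
      ext j
      simp only [C, Finset.mem_filter, Finset.mem_univ, true_and]
      have h1 := hb j
      have h2 := dist_triangle x y (c j)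
      have h3 := dist_triangle y x (c j)
      rw [dist_comm y x] at h3
      rcases lt_abs.1 h1 with h | h
      · constructor <;> intro h4 <;> linarith
      · constructor <;> intro h4 <;> linarith
    simp only [this]
  · intro x B hB
    have hB' : ∀ q, ∃ j, q ∈ B → |dist x (c j) - r q| ≤ δ := fun q => by
      by_cases hq : q ∈ B
      · obtain ⟨j, hj⟩ := hB q hq; exact ⟨j, fun _ => hj⟩
      · exact ⟨⟨0, hkpos⟩, fun h => absurd h hq⟩
    choose g hg using hB'
    have := Finset.card_le_card_of_injOn (s := B) (t := Finset.univ) g (fun _ _ => by simp) ?_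
    · simpa using this
    · intro p hp q hq hpq
      have h1 := abs_le.1 (hg p hp)
      have h2 := abs_le.1 (hg q hq)
      rw [← hpq] at h2
      by_contra hne
      simp only [hr] at h1 h2
      rcases lt_or_gt_of_ne hne with h | h
      · have : (p : ℝ) + 1 ≤ q := by exact_mod_cast h
        nlinarith
      · have : (q : ℝ) + 1 ≤ p := by exact_mod_cast h
        nlinarith

lemma core_bound [CompactSpace X] [Nonempty X] (T : X ≃ₜ X) (ε : ℝ) (hε : 0 < ε) :
    ∃ (δ : ℝ) (_ : 0 < δ) (C : ℝ), ∀ (F : Finset ℤ) (L n : ℕ), (∀ s ∈ F, |s| ≤ (L : ℤ)) →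
      F.card * (Real.log (spaZ T (Finset.Icc 0 ((n : ℤ) - 1)) ε) - C - n)
        ≤ (n + 2 * L + 1) * (F.card * Real.log 2 + Real.log (spaZ T F δ)) := by
  classical
  obtain ⟨k, hk, hround⟩ := exists_roundings (X := X) ε hε
  obtain ⟨δ, hδ, ρ, bad, hρε, hρδ, hbad⟩ := hround (k ^ 2) (by positivity)
  refine ⟨δ, hδ, Real.log ((k ^ 2 : ℕ) : ℝ), fun F L n hL => ?_⟩
  set R := k ^ 2 with hR
  have hRpos : 0 < R := by positivity
  set I := Finset.Icc 0 ((n : ℤ) - 1) with hI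
  have hIcard : I.card = n := by rw [hI, Int.card_Icc]; omega
  obtain ⟨E, hEcard, hE⟩ := exists_separated T I ε hε
  -- each point has a rounding with few bad times
  have hq : ∀ x : X, ∃ q ∈ Finset.range R,
      R * (I.filter (fun i => bad q ((T.toEquiv ^ i) x))).card ≤ k * n := by
    intro x
    apply Finset.exists_le_of_sum_le (Finset.nonempty_range_iff.2 hRpos.ne')
    rw [← Finset.mul_sum, Finset.sum_const, Finset.card_range, smul_eq_mul]
    apply Nat.mul_le_mul_left
    simp_rw [Finset.card_filter]
    rw [Finset.sum_comm]
    calc _ ≤ ∑ i ∈ I, k := by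
          refine Finset.sum_le_sum fun i _ => ?_
          rw [← Finset.card_filter]
          exact hbad ((T.toEquiv ^ i) x) _ (fun q hq => (Finset.mem_filter.1 hq).2)
      _ = k * n := by rw [Finset.sum_const, hIcard, smul_eq_mul, mul_comm]
  choose Q hQR hQ using hq
  obtain ⟨q, hqR, hqcard⟩ : ∃ q ∈ Finset.range R,
      E.card ≤ R * (E.filter (fun x => Q x = q)).card := by
    apply Finset.exists_le_of_sum_le (Finset.nonempty_range_iff.2 hRpos.ne')
    rw [← Finset.mul_sum, Finset.sum_const, Finset.card_range, smul_eq_mul,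
      ← Finset.card_eq_sum_card_fiberwise (fun x _ => hQR x)]
  set E' := E.filter (fun x => Q x = q) with hE'
  have hspapos : 0 < spaZ T I ε := spaZ_pos T I ε hε
  have hE'pos : 0 < E'.card := by
    rcases Nat.eq_zero_or_pos E'.card with h | h
    · rw [h] at hqcard; omega
    · exact h
  have hE'ne : E'.Nonempty := Finset.card_pos.1 hE'pos
  let Y : ℤ → X → Option (Fin k) := fun i x =>
    if bad q ((T.toEquiv ^ i) x) then none else some (ρ q ((T.toEquiv ^ i) x))
  set B := k * n / R with hB
  have hBn : B * k ≤ n := by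
    have h1 : B * R ≤ k * n := Nat.div_mul_le_self _ _
    have h2 : k * (B * k) ≤ k * n := by
      calc k * (B * k) = B * R := by rw [hR]; ring
        _ ≤ _ := h1
    exact Nat.le_of_mul_le_mul_left h2 hk
  have hqlt : q < R := Finset.mem_range.1 hqR
  have hfib : E'.card ≤ k ^ B * nameCard Y I E' := by
    rw [nameCard_eq]
    apply Finset.card_le_mul_card_image
    intro a ha
    obtain ⟨x0, hx0, rfl⟩ := Finset.mem_image.1 ha
    set Z := I.filter (fun i => bad q ((T.toEquiv ^ i) x0)) with hZ
    have hZB : Z.card ≤ B := by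
      rw [hB, Nat.le_div_iff_mul_le hRpos, mul_comm]
      have := hQ x0
      rwa [(Finset.mem_filter.1 hx0).2] at this
    have hYeq : ∀ x, (fun i : I => Y i x) = (fun i : I => Y i x0) →
        ∀ i ∈ I, Y i x = Y i x0 := fun x h i hi => congrFun h ⟨i, hi⟩
    calc _ ≤ (Finset.univ : Finset (Z → Fin k)).card := by
          refine Finset.card_le_card_of_injOn (fun x => fun i : Z => ρ q ((T.toEquiv ^ (i : ℤ)) x))
            (fun _ _ => by simp) ?_
          intro x hx y hy hxy
          have hx' := Finset.mem_filter.1 hx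
          have hy' := Finset.mem_filter.1 hy
          refine hE x (Finset.mem_filter.1 hx'.1).1 y (Finset.mem_filter.1 hy'.1).1 fun i hi => ?_
          apply hρε q hqlt
          by_cases hiZ : i ∈ Z
          · exact congrFun hxy ⟨i, hiZ⟩
          · have hb0 : ¬ bad q ((T.toEquiv ^ i) x0) := fun h =>
              hiZ (Finset.mem_filter.2 ⟨hi, h⟩)
            have h1 := hYeq x hx'.2 i hi
            have h2 := hYeq y hy'.2 i hi
            have h3 := h1.trans h2.symm
            have hbx : ¬ bad q ((T.toEquiv ^ i) x) := by
              intro h; simp [Y, h, hb0] at h1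
            have hby : ¬ bad q ((T.toEquiv ^ i) y) := by
              intro h; simp [Y, h, hb0] at h2
            simpa [Y, hbx, hby] using h3
      _ = k ^ Z.card := by simp
      _ ≤ k ^ B := Nat.pow_le_pow_right hk hZB
  -- few names on translates of F
  obtain ⟨S, hScard, hS⟩ := spaZ_spec T F δ hδ
  have hSpos : 0 < spaZ T F δ := spaZ_pos T F δ hδ
  have hK : ∀ t : ℤ, Real.log (nameCard Y (I.filter (fun i => i - t ∈ F)) E')
      ≤ F.card * Real.log 2 + Real.log (spaZ T F δ) := by
    intro t
    have hle : nameCard Y (I.filter (fun i => i - t ∈ F)) E' ≤ spaZ T F δ * 2 ^ F.card := by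
      rw [← hScard, ← Finset.card_powerset, ← Finset.card_product]
      rw [nameCard_eq]
      refine le_trans (Finset.card_le_card ?_) (Finset.card_image_le
        (f := fun p : X × Finset ℤ => fun i : I.filter (fun i => i - t ∈ F) =>
          if (i : ℤ) - t ∈ p.2 then none else some (ρ q ((T.toEquiv ^ ((i : ℤ) - t)) p.1))))
      intro a ha
      obtain ⟨x, hx, rfl⟩ := Finset.mem_image.1 ha
      obtain ⟨e, heS, he⟩ := hS ((T.toEquiv ^ t) x)
      have hcomp : ∀ s : ℤ, (T.toEquiv ^ s) ((T.toEquiv ^ t) x) = (T.toEquiv ^ (s + t)) x := by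
        intro s; rw [zpow_add, Equiv.Perm.mul_apply]
      refine Finset.mem_image.2 ⟨(e, F.filter (fun s => bad q ((T.toEquiv ^ (s + t)) x))), ?_, ?_⟩
      · exact Finset.mem_product.2 ⟨heS, Finset.mem_powerset.2 (Finset.filter_subset _ _)⟩
      · funext ⟨i, hi⟩
        have hiF : i - t ∈ F := (Finset.mem_filter.1 hi).2
        by_cases hb : bad q ((T.toEquiv ^ i) x)
        · simp [Y, hb, hiF]
        · have h1 := he _ hiF
          rw [hcomp, sub_add_cancel] at h1
          have := hρδ q _ _ hb h1
          simp [Y, hb, hiF, this]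
    have hpos := nameCard_pos Y (I.filter (fun i => i - t ∈ F)) hE'ne
    calc _ ≤ Real.log ((spaZ T F δ * 2 ^ F.card : ℕ) : ℝ) :=
          Real.log_le_log (by exact_mod_cast hpos) (by exact_mod_cast hle)
      _ = _ := by
          push_cast
          rw [Real.log_mul (by exact_mod_cast hSpos.ne') (by positivity), Real.log_pow]
          ring
  have hsh := shearer_translates Y E' hE'ne F L n hL _ hK
  refine le_trans (mul_le_mul_of_nonneg_left ?_ (Nat.cast_nonneg _)) hsh
  have hNpos := nameCard_pos Y I hE'ne
  have l1 : Real.log (spaZ T I ε) ≤ Real.log ((R * (k ^ B * nameCard Y I E') : ℕ) : ℝ) := by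
    apply Real.log_le_log (by exact_mod_cast hspapos)
    exact_mod_cast hEcard.trans (hqcard.trans (Nat.mul_le_mul_left _ hfib))
  have hk' : (0 : ℝ) < k := by exact_mod_cast hk
  have l2 : Real.log ((R * (k ^ B * nameCard Y I E') : ℕ) : ℝ)
      = Real.log (R : ℝ) + (B * Real.log k + Real.log (nameCard Y I E')) := by
    push_cast
    rw [Real.log_mul (by exact_mod_cast hRpos.ne')
      (mul_ne_zero (by positivity) (by exact_mod_cast hNpos.ne')),
      Real.log_mul (by positivity) (by exact_mod_cast hNpos.ne'), Real.log_pow]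
  have l3 : (B : ℝ) * Real.log k ≤ n := by
    have h1 : Real.log k ≤ k := (Real.log_le_sub_one_of_pos hk').trans (by linarith)
    have h2 : (B : ℝ) * k ≤ n := by exact_mod_cast hBn
    exact (mul_le_mul_of_nonneg_left h1 (Nat.cast_nonneg _)).trans h2
  linarith

lemma stmt_one [CompactSpace X] [Nonempty X] (T : X ≃ₜ X) (hinf : htopZ T = ⊤) (N : ℕ) :
    ∃ δ : ℝ, 0 < δ ∧ ∀ F : Finset ℤ, (F.card : ℝ) * N ≤ Real.log (spaZ T F δ) := by
  have hlt : (((N : ℝ) + 2 : ℝ) : EReal) < htopZ T := by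
    rw [hinf]; exact EReal.coe_lt_top _
  unfold htopZ at hlt
  obtain ⟨ε, hlt⟩ := lt_iSup_iff.1 hlt
  obtain ⟨hε, hlt⟩ := lt_iSup_iff.1 hlt
  have hfreq := Filter.frequently_lt_of_lt_limsup (by isBoundedDefault) hlt
  obtain ⟨δ, hδ, C, hcore⟩ := core_bound T ε hε
  refine ⟨δ, hδ, fun F => ?_⟩
  obtain ⟨L, hL⟩ : ∃ L : ℕ, ∀ s ∈ F, |s| ≤ (L : ℤ) := by
    refine ⟨F.sup Int.natAbs, fun s hs => ?_⟩
    have := Finset.le_sup (f := Int.natAbs) hs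
    rw [Int.abs_eq_natAbs]
    exact_mod_cast this
  by_contra hcon
  push Not at hcon
  set f : ℝ := (F.card : ℝ) with hf
  set K : ℝ := f * Real.log 2 + Real.log (spaZ T F δ) with hKdef
  have hf0 : 0 ≤ f := Nat.cast_nonneg _
  have hlog2 : Real.log 2 ≤ 1 := by
    have := Real.log_le_sub_one_of_pos (show (0:ℝ) < 2 by norm_num); linarith
  have hgap : 0 < f * (N + 1) - K := by
    have : f * Real.log 2 ≤ f := by nlinarith
    rw [hKdef]; nlinarith
  obtain ⟨n0, hn0⟩ := exists_nat_gt ((f * C + (2 * L + 1) * K) / (f * (N + 1) - K))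
  obtain ⟨n, hn, hnl⟩ := (hfreq.and_eventually (Filter.eventually_ge_atTop (n0 + 1))).exists
  have hn' : (N : ℝ) + 2 < Real.log (spaZ T (Finset.Icc 0 ((n : ℤ) - 1)) ε) / n := by
    exact_mod_cast hn
  have hnpos : (0 : ℝ) < n := by exact_mod_cast (by omega : 0 < n)
  rw [lt_div_iff₀ hnpos] at hn'
  have hc := hcore F L n hL
  rw [div_lt_iff₀ hgap] at hn0
  have hnn : (n0 : ℝ) ≤ n := by exact_mod_cast (by omega : n0 ≤ n)
  have h1 : f * (((N : ℝ) + 2) * n - C - n) ≤ (n + 2 * L + 1) * K :=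
    (mul_le_mul_of_nonneg_left (by linarith) hf0).trans hc
  have h2 := mul_le_mul_of_nonneg_right hnn hgap.le
  nlinarith

/-- Let `T` be a homeomorphism of a compact metric space with infinite
topological entropy and fix `m ≥ 1`. Then for every `N ∈ ℕ` there is `δ > 0` such that
`C_m(F)·N ≤ (1/|F|) log spa(T,F,δ)` for every finite `F ⊆ ℤ`. -/
theorem stmt11 [CompactSpace X] [Nonempty X] (T : X ≃ₜ X) (m : ℕ) (hm : 1 ≤ m)
    (hinf : htopZ T = ⊤) (N : ℕ) :
    ∃ δ : ℝ, 0 < δ ∧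
      ∀ F : Finset ℤ, Cm m F * (N : ℝ) ≤ Real.log (spaZ T F δ) / (F.card : ℝ) := by
  classical
  obtain ⟨δ₁, hδ₁, h1⟩ := stmt_one T hinf N
  obtain ⟨δ, hδ, hu⟩ := exists_unif T (Finset.Icc (0 : ℤ) ((m : ℤ) - 1)) δ₁ hδ₁
  refine ⟨δ, hδ, fun F => ?_⟩
  unfold Cm
  rw [div_mul_eq_mul_div]
  refine div_le_div_of_nonneg_right ((h1 _).trans ?_) (Nat.cast_nonneg _)
  refine Real.log_le_log (by exact_mod_cast spaZ_pos T _ δ₁ hδ₁) ?_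
  obtain ⟨E, hE, hs⟩ := spaZ_spec T F δ hδ
  rw [← hE]
  refine Nat.cast_le.2 ?_
  refine spaZ_le T _ _ E fun x => ?_
  obtain ⟨e, he, h⟩ := hs x
  refine ⟨e, he, fun i hi => ?_⟩
  obtain ⟨a, ha, b, hb, rfl⟩ := Finset.mem_add.1 hi
  have := hu _ _ (h a ha) b hb
  rwa [← Equiv.Perm.mul_apply, ← Equiv.Perm.mul_apply, ← zpow_add, add_comm b a] at this
end
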